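/- There exists a constant C > 0 such that the following holds for all positive integers n, k, c. Suppose Π : {0,1}^{n×k} → ℝ is a finite linear combination Π = Σ_j a_j χ_j of min{c,k}-cylinder intersections with Σ_j |a_j| ≤ 2^c, such that |Π(X)| ≤ 1 for all X ∈ {0,1}^{n×k} and |UDISJ_{n,k}(X) − Π(X)| ≤ 1/4 for all X in the domain of UDISJ_{n,k}. Then C(k,≤c)² · c⁴ ≥ C·n, where C(k,≤c) = Σ_{i=0}^{min{c,k}} C(k,i). -/

import Mathlib

open Finset

/-- `X ∈ {0,1}^{n×k}` has at most one all-ones row (the domain of `UDISJ_{n,k}`). -/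
def AtMostOneAllOnes (n k : ℕ) (X : Fin n → Fin k → Bool) : Prop :=
  (Finset.univ.filter (fun i : Fin n => ∀ j, X i j = true)).card ≤ 1

/-- The value of (unique) set disjointness: `1` iff `X` has no all-ones row. -/
def DISJ (n k : ℕ) (X : Fin n → Fin k → Bool) : Bool :=
  decide (∀ i, ∃ j, X i j = false)

/-- `χ` is an `S`-cylinder intersection on `{0,1}^{n×k}`: a product over `j ∈ S` of
`{0,1}`-valued functions `φ j`, where `φ j` does not depend on the `j`-th column. -/
def IsCylinderOn (n k : ℕ) (S : Finset (Fin k))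
    (χ : (Fin n → Fin k → Bool) → ℝ) : Prop :=
  ∃ φ : Fin k → ((Fin n → Fin k → Bool) → ℝ),
    (∀ j ∈ S, ∀ X, φ j X = 0 ∨ φ j X = 1) ∧
    (∀ j ∈ S, ∀ X Y, (∀ i, ∀ j', j' ≠ j → X i j' = Y i j') → φ j X = φ j Y) ∧
    (∀ X, χ X = ∏ j ∈ S, φ j X)

/-!
Fix a column `y` and disjoint blocks `s b` of `r` rows each. In every block choose a marked row that
is all ones outside `y`; the other rows have between `1` and `c` zeros outside `y`, so that they
look almost full while never being all ones. If the marked entries in column `y` are independent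
Bernoulli(`ρ`) bits, the mean of `Π` is a polynomial in `ρ` whose coefficients are sums of
correlations of `Π` with products of signs of marked entries.

A cylinder intersection hardly correlates with such products. Eliminating its columns one at a time
by Cauchy–Schwarz shows that a product over `m` blocks has correlation at most `(2K / √r) ^ m`, with
`K = C(k, ≤ c)`. For `r` of order `(cK)²` the mean of `Π` is therefore uniformly close to a
polynomial of degree at most `c`, which is bounded on `[0, 1]`. Its linear coefficient, however, is
proportional to the number of blocks, because `Π` drops from about `1` to about `0` whenever a
single row becomes all ones. Markov's inequality for polynomials then leaves room for only `O(c²)`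
blocks, that is, for `O(c²) · O(c²K²)` rows.
-/

namespace UniqueDisjointness

open Function
open scoped BigOperators

section Averages

variable {ι α γ : Type*}

lemma expect_expect_fst_of_involutive [Fintype α] [Fintype γ] [Nonempty γ] {σ : α × γ → α × γ}
    (hσ : Involutive σ) (F : α → ℝ) : 𝔼 a, 𝔼 c, F (σ (a, c)).1 = 𝔼 a, F a := by
  calc 𝔼 a, 𝔼 c, F (σ (a, c)).1
      = 𝔼 p : α × γ, F (σ p).1 := (expect_product univ univ fun p : α × γ => F (σ p).1).symm
    _ = 𝔼 p : α × γ, F p.1 := Fintype.expect_equiv hσ.toPerm _ _ fun _ => rfl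
    _ = 𝔼 a, 𝔼 _c : γ, F a := expect_product univ univ fun p : α × γ => F p.1
    _ = 𝔼 a, F a := by simp only [Fintype.expect_const]

lemma sq_expect_le_of_sq_le_mul [Fintype α] {f w g : α → ℝ} (hw : ∀ a, 0 ≤ w a)
    (hg : ∀ a, 0 ≤ g a) (h : ∀ a, f a ^ 2 ≤ w a * g a) :
    (𝔼 a, f a) ^ 2 ≤ (𝔼 a, w a) * 𝔼 a, g a := by
  simp only [Fintype.expect_eq_sum_div_card, div_pow, div_mul_div_comm, ← sq]
  gcongr
  exact sum_sq_le_sum_mul_sum_of_sq_le_mul _ (fun a _ => hw a) (fun a _ => hg a) fun a _ => h a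

lemma dependsOn_prod {β : Type*} {B : Finset β} {f : β → (ι → α) → ℝ} {s : Set ι}
    (hf : ∀ b ∈ B, DependsOn (f b) s) : DependsOn (fun z => ∏ b ∈ B, f b z) s :=
  fun _ _ h => prod_congr rfl fun b hb => hf b hb h

/-- The sum of `∏ t ∈ s, h t (z t)` over the ways to take `h t = p` at one element of `s` and
`h t = q` at all the others. -/
def markedSum [DecidableEq ι] (p q : α → ℝ) (s : Finset ι) (z : ι → α) : ℝ :=
  ∑ i ∈ s, p (z i) * ∏ t ∈ s.erase i, q (z t)

variable [Fintype ι] [DecidableEq ι] [Fintype α] [Nonempty α]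

lemma expect_piecewise (s : Finset ι) (f : (ι → α) → ℝ) :
    𝔼 u, 𝔼 v, f (s.piecewise u v) = 𝔼 u, f u :=
  expect_expect_fst_of_involutive
    (σ := fun p : (ι → α) × (ι → α) => (s.piecewise p.1 p.2, s.piecewise p.2 p.1))
    (fun p => by ext i <;> by_cases hi : i ∈ s <;> simp [hi]) f

lemma expect_eval (i : ι) (f : α → ℝ) : 𝔼 z : ι → α, f (z i) = 𝔼 a, f a := by
  have h := expect_expect_fst_of_involutive
    (σ := fun p : (ι → α) × α => (update p.1 i p.2, p.1 i)) (fun p => by simp) fun z => f (z i)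
  simpa only [update_self, Fintype.expect_const] using h.symm

lemma expect_mul_of_dependsOn {s : Finset ι} {f g : (ι → α) → ℝ} (hf : DependsOn f s)
    (hg : DependsOn g (s : Set ι)ᶜ) : 𝔼 z, f z * g z = (𝔼 z, f z) * 𝔼 z, g z := by
  rw [Fintype.expect_mul_expect, ← expect_piecewise s]
  refine expect_congr rfl fun u _ => expect_congr rfl fun v _ => ?_
  rw [hf (y := u) fun i hi => s.piecewise_eq_of_mem u v hi,
    hg (y := v) fun i hi => s.piecewise_eq_of_notMem u v hi]

lemma expect_prod_of_dependsOn {β : Type*} {B : Finset β} {s : β → Finset ι}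
    {f : β → (ι → α) → ℝ} (hs : (B : Set β).PairwiseDisjoint s)
    (hf : ∀ b ∈ B, DependsOn (f b) (s b)) :
    𝔼 z, ∏ b ∈ B, f b z = ∏ b ∈ B, 𝔼 z, f b z := by
  classical
  induction B using Finset.induction with
  | empty => simp
  | insert b B hb ih =>
    rw [coe_insert] at hs
    simp only [prod_insert hb]
    rw [expect_mul_of_dependsOn (hf b (mem_insert_self b B)),
      ih (hs.subset (Set.subset_insert _ _)) fun c hc => hf c (mem_insert_of_mem hc)]
    refine dependsOn_prod fun c hc => (hf c (mem_insert_of_mem hc)).mono fun i hi hib => ?_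
    exact disjoint_left.1 (hs (by simp) (by simp [hc]) (ne_of_mem_of_not_mem hc hb).symm) hib hi

lemma expect_prod_eval (s : Finset ι) (f : ι → α → ℝ) :
    𝔼 z : ι → α, ∏ i ∈ s, f i (z i) = ∏ i ∈ s, 𝔼 a, f i a := by
  rw [expect_prod_of_dependsOn (s := fun i => {i}) (f := fun i z => f i (z i))]
  · simp only [expect_eval]
  · exact fun i _ j _ hij => disjoint_singleton.2 hij
  · exact fun i _ z z' h => congrArg (f i) (h i (by simp))

lemma expect_markedSum (p q : α → ℝ) (s : Finset ι) :
    𝔼 z, markedSum p q s z = #s * (𝔼 a, p a) * (𝔼 a, q a) ^ (#s - 1) := by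
  have hterm (i) (hi : i ∈ s) : 𝔼 z : ι → α, p (z i) * ∏ t ∈ s.erase i, q (z t) =
      (𝔼 a, p a) * (𝔼 a, q a) ^ (#s - 1) := by
    have h (z : ι → α) : p (z i) * ∏ t ∈ s.erase i, q (z t) =
        ∏ t ∈ s, update (fun _ => q) i p t (z t) := by
      rw [← mul_prod_erase s _ hi, update_self]
      congr 1
      exact prod_congr rfl fun t ht => by rw [update_of_ne (ne_of_mem_erase ht)]
    simp only [h, expect_prod_eval]
    rw [← mul_prod_erase s _ hi, update_self, ← card_erase_of_mem hi, ← prod_const]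
    congr 1
    exact prod_congr rfl fun t ht => by rw [update_of_ne (ne_of_mem_erase ht)]
  simp only [markedSum]
  rw [expect_sum_comm, sum_congr rfl hterm, sum_const, nsmul_eq_mul, mul_assoc]

end Averages

section SoleSum

variable {ι : Type*}

/-- The value of `σ` at the only element of `F`; it is `0` if `F` is not a singleton. -/
def soleSum (F : Finset ι) (σ : ι → ℝ) : ℝ := if #F = 1 then ∑ t ∈ F, σ t else 0

@[simp]
lemma soleSum_empty (σ : ι → ℝ) : soleSum ∅ σ = 0 := by simp [soleSum]

lemma soleSum_congr {F : Finset ι} {σ τ : ι → ℝ} (h : ∀ t ∈ F, σ t = τ t) :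
    soleSum F σ = soleSum F τ := by rw [soleSum, soleSum, sum_congr rfl h]

lemma soleSum_mul_soleSum_eq_zero {F G : Finset ι} (h : ¬(#F = 1 ∧ #G = 1)) (σ τ : ι → ℝ) :
    soleSum F σ * soleSum G τ = 0 := by
  rcases not_and_or.1 h with h | h <;> simp [soleSum, h]

lemma soleSum_sq {σ : ι → ℝ} (hσ : ∀ t, σ t ^ 2 = 1) (F : Finset ι) :
    soleSum F σ ^ 2 = if #F = 1 then 1 else 0 := by
  unfold soleSum
  split_ifs with hF
  · obtain ⟨t, rfl⟩ := card_eq_one.1 hF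
    simp [hσ]
  · simp

lemma soleSum_union [DecidableEq ι] {F G : Finset ι} (h : Disjoint F G) (σ : ι → ℝ) :
    soleSum (F ∪ G) σ = (if G = ∅ then soleSum F σ else 0) + if F = ∅ then soleSum G σ else 0 := by
  rcases F.eq_empty_or_nonempty with rfl | hF
  · by_cases hG : G = ∅ <;> simp [hG]
  rcases G.eq_empty_or_nonempty with rfl | hG
  · simp [hF.ne_empty]
  have : #(F ∪ G) ≠ 1 := by
    have := hF.card_pos
    have := hG.card_pos
    rw [card_union_of_disjoint h]
    omega
  simp [soleSum, this, hF.ne_empty, hG.ne_empty]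

lemma soleSum_filter_eq_markedSum {α : Type*} [DecidableEq ι] (P : α → Prop) [DecidablePred P]
    (f : α → ℝ) (s : Finset ι) (z : ι → α) :
    soleSum {t ∈ s | P (z t)} (fun t => f (z t)) =
      markedSum (fun a => if P a then f a else 0) (fun a => if P a then 0 else 1) s z := by
  have hprod (i) : ∏ t ∈ s.erase i, (if P (z t) then (0 : ℝ) else 1) =
      if {t ∈ s | P (z t)} ⊆ {i} then 1 else 0 := by
    simp only [← ite_not (P (z _)), prod_boole]
    congr 1
    simp only [mem_erase, subset_iff, mem_filter, mem_singleton, eq_iff_iff]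
    grind
  simp only [markedSum, hprod, ite_mul, zero_mul, ← sum_filter]
  rw [soleSum]
  split_ifs with hF
  · obtain ⟨i, hi⟩ := card_eq_one.1 hF
    simp [hi]
  · refine (sum_eq_zero fun i hi => ?_).symm
    rw [if_neg, mul_zero]
    exact fun h => hF (card_eq_one.2 ⟨i, h.antisymm (singleton_subset_iff.2 hi)⟩)

end SoleSum

section Rows

variable {T κ : Type*}

/-- The row `r` has ones in all columns of `S`. -/
def AllOnesOn (S : Finset κ) (r : κ → Bool) : Prop := ∀ j ∈ S, r j = true

instance (S : Finset κ) : DecidablePred (AllOnesOn S) :=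
  fun r => inferInstanceAs (Decidable (∀ j ∈ S, r j = true))

/-- `(-1) ^ b`. -/
def boolSign (b : Bool) : ℝ := if b then -1 else 1

lemma boolSign_sq (b : Bool) : boolSign b ^ 2 = 1 := by cases b <;> simp [boolSign]

lemma expect_bool (f : Bool → ℝ) : 𝔼 b, f b = (f true + f false) / 2 := by
  rw [Fintype.expect_eq_sum_div_card, Fintype.sum_bool, Fintype.card_bool, Nat.cast_ofNat]

lemma expect_boolSign : 𝔼 b, boolSign b = 0 := by
  rw [expect_bool]
  simp [boolSign]

lemma expect_allOnesOn [Fintype κ] [DecidableEq κ] (S : Finset κ) :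
    𝔼 r : κ → Bool, (if AllOnesOn S r then (1 : ℝ) else 0) = (1 / 2) ^ #S := by
  have h (r : κ → Bool) : (if AllOnesOn S r then (1 : ℝ) else 0) =
      ∏ j ∈ S, if r j = true then 1 else 0 := by rw [prod_boole]; rfl
  simp only [h]
  rw [expect_prod_eval S fun _ (b : Bool) => if b = true then (1 : ℝ) else 0]
  simp only [expect_bool]
  simp

variable [DecidableEq κ]

lemma allOnesOn_insert_update {S : Finset κ} {j : κ} (hj : j ∉ S) (r : κ → Bool) (b : Bool) :
    AllOnesOn (insert j S) (update r j b) ↔ AllOnesOn S r ∧ b = true := by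
  have h : (∀ i ∈ S, update r j b i = true) ↔ AllOnesOn S r :=
    forall₂_congr fun i hi => by rw [update_of_ne (ne_of_mem_of_not_mem hi hj)]
  rw [AllOnesOn, forall_mem_insert, h, update_self, and_comm]

/-- The matrix `X` with column `j` replaced by `x`. -/
def setColumn (j : κ) (x : T → Bool) (X : T → κ → Bool) : T → κ → Bool :=
  fun t => update (X t) j (x t)

lemma expect_setColumn [Fintype T] [DecidableEq T] [Fintype κ] (j : κ)
    (f : (T → κ → Bool) → ℝ) : 𝔼 X, 𝔼 x, f (setColumn j x X) = 𝔼 X, f X :=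
  expect_expect_fst_of_involutive
    (σ := fun p : (T → κ → Bool) × (T → Bool) => (setColumn j p.2 p.1, fun t => p.1 t j))
    (fun p => by ext <;> simp [setColumn]) f

end Rows

section CylinderProduct

variable {T T' κ : Type*}

/-- `f` does not depend on column `j`. -/
def IgnoresColumn (j : κ) (f : (T → κ → Bool) → ℝ) : Prop :=
  ∀ X Y : T → κ → Bool, (∀ t, ∀ i ≠ j, X t i = Y t i) → f X = f Y

/-- A product over `j ∈ S` of functions with values in `[-1, 1]` that ignore column `j`. Unlike
cylinder intersections, these are closed under the absorption of signs and bounded factors. -/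
def IsCylinderProduct (S : Finset κ) (χ : (T → κ → Bool) → ℝ) : Prop :=
  ∃ φ : κ → (T → κ → Bool) → ℝ, (∀ j ∈ S, ∀ X, |φ j X| ≤ 1) ∧ (∀ j ∈ S, IgnoresColumn j (φ j)) ∧
    ∀ X, χ X = ∏ j ∈ S, φ j X

/-- Each column of `h X` depends only on the same column of `X`. -/
def IsColumnwise (h : (T → κ → Bool) → T' → κ → Bool) : Prop :=
  ∀ j X Y, (∀ t, X t j = Y t j) → ∀ t, h X t j = h Y t j

lemma IgnoresColumn.comp {j : κ} {f : (T' → κ → Bool) → ℝ} (hf : IgnoresColumn j f)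
    {h : (T → κ → Bool) → T' → κ → Bool} (hh : IsColumnwise h) : IgnoresColumn j (f ∘ h) :=
  fun X Y hXY => hf _ _ fun t i hi => hh i X Y (fun t => hXY t i hi) t

lemma isColumnwise_setColumn [DecidableEq κ] (j : κ) (x : T → Bool) :
    IsColumnwise (setColumn j x) := by
  intro i X Y h t
  by_cases hi : i = j
  · subst hi; simp [setColumn]
  · simp [setColumn, hi, h]

lemma IgnoresColumn.apply_setColumn [DecidableEq κ] {j : κ} {f : (T → κ → Bool) → ℝ}
    (hf : IgnoresColumn j f) (x : T → Bool) (X : T → κ → Bool) : f (setColumn j x X) = f X :=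
  hf _ _ fun _ _ hi => update_of_ne hi _ _

namespace IsCylinderProduct

variable {S S' : Finset κ} {χ χ' : (T → κ → Bool) → ℝ}

lemma abs_le_one (hχ : IsCylinderProduct S χ) (X : T → κ → Bool) : |χ X| ≤ 1 := by
  obtain ⟨φ, hφ, -, hprod⟩ := hχ
  rw [hprod, abs_prod]
  exact prod_le_one (fun _ _ => abs_nonneg _) fun j hj => hφ j hj X

lemma mono (hχ : IsCylinderProduct S χ) (hS : S ⊆ S') :
    IsCylinderProduct S' χ := by
  classical
  obtain ⟨φ, hφ, hcol, hprod⟩ := hχ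
  refine ⟨fun j X => if j ∈ S then φ j X else 1, fun j _ X => ?_, fun j _ X Y hXY => ?_,
    fun X => ?_⟩
  · dsimp only
    split_ifs with hj
    · exact hφ j hj X
    · simp
  · dsimp only
    split_ifs with hj
    · exact hcol j hj X Y hXY
    · rfl
  · rw [hprod, prod_ite_mem, inter_eq_right.2 hS]

lemma mul (hχ : IsCylinderProduct S χ) (hχ' : IsCylinderProduct S χ') :
    IsCylinderProduct S fun X => χ X * χ' X := by
  obtain ⟨φ, hφ, hcol, hprod⟩ := hχ
  obtain ⟨φ', hφ', hcol', hprod'⟩ := hχ'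
  refine ⟨fun j X => φ j X * φ' j X, fun j hj X => ?_, fun j hj X Y hXY => ?_, fun X => ?_⟩
  · rw [abs_mul]
    exact mul_le_one₀ (hφ j hj X) (abs_nonneg _) (hφ' j hj X)
  · simp only [hcol j hj X Y hXY, hcol' j hj X Y hXY]
  · simp only [hprod, hprod', prod_mul_distrib]

lemma comp {χ : (T' → κ → Bool) → ℝ} (hχ : IsCylinderProduct S χ)
    {h : (T → κ → Bool) → T' → κ → Bool} (hh : IsColumnwise h) :
    IsCylinderProduct S (χ ∘ h) := by
  obtain ⟨φ, hφ, hcol, hprod⟩ := hχ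
  exact ⟨fun j => φ j ∘ h, fun j hj X => hφ j hj (h X), fun j hj => (hcol j hj).comp hh,
    fun X => hprod (h X)⟩

lemma exists_eq_mul [DecidableEq κ] {j : κ} (hj : j ∉ S)
    (hχ : IsCylinderProduct (insert j S) χ) :
    ∃ φ ψ, (∀ X, |φ X| ≤ 1) ∧ IgnoresColumn j φ ∧ IsCylinderProduct S ψ ∧
      ∀ X, χ X = φ X * ψ X := by
  obtain ⟨φ, hφ, hcol, hprod⟩ := hχ
  exact ⟨φ j, fun X => ∏ i ∈ S, φ i X, hφ j (mem_insert_self j S), hcol j (mem_insert_self j S),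
    ⟨φ, fun i hi => hφ i (mem_insert_of_mem hi), fun i hi => hcol i (mem_insert_of_mem hi),
      fun _ => rfl⟩, fun X => by rw [hprod, prod_insert hj]⟩

end IsCylinderProduct

end CylinderProduct

section Overlap

/-- `2 ^ g / g`, the inverse of the mean of `|soleSum F|` over a random subset `F` of a set of size
`g`. Its value at `g = 0` is the junk value `0`, which matches `soleSum ∅ = 0`. -/
noncomputable def twoPowDiv (g : ℕ) : ℝ := 2 ^ g / g

lemma twoPowDiv_nonneg (g : ℕ) : 0 ≤ twoPowDiv g := by unfold twoPowDiv; positivity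

lemma mul_twoPowDiv_le (g : ℕ) : g * twoPowDiv g ≤ 2 ^ g := by
  rcases eq_or_ne (g : ℝ) 0 with hg | hg
  · rw [hg, zero_mul]
    positivity
  · rw [twoPowDiv, mul_div_cancel₀ _ hg]

lemma twoPowDiv_add_two_le (g : ℕ) : twoPowDiv (g + 2) ≤ 2 * twoPowDiv (g + 1) := by
  unfold twoPowDiv
  rw [mul_div_assoc', ← pow_succ']
  gcongr
  simp

variable {T ρ : Type*} (P : ρ → Prop) [DecidablePred P]

/-- The positions of `s` whose row satisfies `P` and carries the pair of bits `q`. -/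
def fullPositions (q : Bool × Bool) (s : Finset T) (z : T → ρ × Bool × Bool) : Finset T :=
  {t ∈ s | P (z t).1 ∧ (z t).2 = q}

/-- The positions of `s` that carry the pair of bits `q`. -/
def positions (q : Bool × Bool) (s : Finset T) (z : T → ρ × Bool × Bool) : Finset T :=
  {t ∈ s | (z t).2 = q}

/-- If every position of `s` with a row in `P` carries `(0, 0)`, the value `twoPowDiv (g + 1)`
for the number `g` of these positions, and `0` otherwise. -/
noncomputable def quietKernel (s : Finset T) (z : T → ρ × Bool × Bool) : ℝ :=
  if ∀ t ∈ s, P (z t).1 → (z t).2 = (false, false)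
  then twoPowDiv (#(fullPositions P (false, false) s z) + 1) else 0

/-- The indicator of the rows that can be singled out in `overlapKernel_le_sum`. -/
def overlapMark (a : ρ × Bool × Bool) : ℝ :=
  if (P a.1 ∧ a.2 = (true, true)) ∨ (¬ P a.1 ∧ a.2.1 ≠ a.2.2) then 1 else 0

/-- The indicator of the rows in `P` that carry `(0, 0)`. Its average is a known multiple of the
average of `overlapMark`, so that one mark can be exchanged for the other. -/
def quietMark (a : ρ × Bool × Bool) : ℝ := if P a.1 ∧ a.2 = (false, false) then 1 else 0

/-- A weight whose product bounds `∑ i ∈ s, quietMark P (z i) * quietKernel P (s.erase i) z`. -/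
def quietWeight (a : ρ × Bool × Bool) : ℝ :=
  if P a.1 then (if a.2 = (false, false) then 2 else 0) else 1

lemma quietKernel_nonneg (s : Finset T) (z : T → ρ × Bool × Bool) : 0 ≤ quietKernel P s z := by
  unfold quietKernel
  split_ifs
  exacts [twoPowDiv_nonneg _, le_rfl]

lemma overlapMark_nonneg (a : ρ × Bool × Bool) : 0 ≤ overlapMark P a := by
  unfold overlapMark
  split_ifs <;> norm_num

lemma sqrt_mul_sqrt_le {a b : ℝ} (ha : 0 ≤ a) (hb : 0 ≤ b) : √a * √b ≤ (a + b) / 2 := by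
  nlinarith [sq_nonneg (√a - √b), Real.sq_sqrt ha, Real.sq_sqrt hb]

lemma disjoint_fullPositions {q q' : Bool × Bool} (h : q ≠ q') (s : Finset T)
    (z : T → ρ × Bool × Bool) : Disjoint (fullPositions P q s z) (fullPositions P q' s z) :=
  disjoint_filter.2 fun _ _ ht ht' => h (ht.2.symm.trans ht'.2)

variable {P} in
lemma snd_eq_false_of_notMem {s : Finset T} {z : T → ρ × Bool × Bool}
    (h10 : fullPositions P (true, false) s z = ∅) (h01 : fullPositions P (false, true) s z = ∅)
    {t : T} (hts : t ∈ s) (hPt : P (z t).1) (h11 : t ∉ fullPositions P (true, true) s z) :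
    (z t).2 = (false, false) := by
  have h (q) (hq : t ∉ fullPositions P q s z) : (z t).2 ≠ q := fun h =>
    hq (mem_filter.2 ⟨hts, hPt, h⟩)
  have : ∀ q : Bool × Bool, q ≠ (true, true) → q ≠ (true, false) → q ≠ (false, true) →
      q = (false, false) := by decide
  exact this _ (h _ h11) (h _ (h10 ▸ notMem_empty t)) (h _ (h01 ▸ notMem_empty t))

variable [DecidableEq T]

/-- The bits of a position say whether it is selected by each of two copies of a column. This is the
contribution to `overlapKernel` of the case where both copies select the same single row. -/
noncomputable def commonKernel (s : Finset T) (z : T → ρ × Bool × Bool) : ℝ :=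
  if #(fullPositions P (true, true) s z) = 1 ∧ fullPositions P (true, false) s z = ∅ ∧
    fullPositions P (false, true) s z = ∅
  then twoPowDiv (#(fullPositions P (false, false) s z) + 1) else 0

/-- The weight of the case where the two copies select different rows. -/
noncomputable def splitKernel (s : Finset T) (z : T → ρ × Bool × Bool) : ℝ :=
  if fullPositions P (true, true) s z = ∅
  then twoPowDiv (#(fullPositions P (false, false) s z) + 2) else 0

lemma commonKernel_nonneg (s : Finset T) (z : T → ρ × Bool × Bool) :
    0 ≤ commonKernel P s z := by
  unfold commonKernel
  split_ifs
  exacts [twoPowDiv_nonneg _, le_rfl]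

lemma splitKernel_nonneg (s : Finset T) (z : T → ρ × Bool × Bool) :
    0 ≤ splitKernel P s z := by
  unfold splitKernel
  split_ifs
  exacts [twoPowDiv_nonneg _, le_rfl]

/-- What is left of `twoPowDiv_mul_selectedSign` on one block after the signs of the rows with bits
`(1, 0)` and `(0, 1)` have been replaced by the bound that `BlockSignBound` gives for them. -/
noncomputable def overlapKernel (s : Finset T) (z : T → ρ × Bool × Bool) : ℝ :=
  commonKernel P s z +
    splitKernel P s z *
      ((√(#(positions (true, false) s z)) *
          if fullPositions P (true, false) s z = ∅ then 1 else 0) *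
        (√(#(positions (false, true) s z)) *
          if fullPositions P (false, true) s z = ∅ then 1 else 0))

lemma fullPositions_erase {q : Bool × Bool} {s : Finset T} {z : T → ρ × Bool × Bool} {i : T}
    (hi : i ∉ fullPositions P q s z) :
    fullPositions P q (s.erase i) z = fullPositions P q s z := by
  rw [fullPositions, filter_erase]
  exact erase_eq_of_notMem hi

lemma commonKernel_le_sum (s : Finset T) (z : T → ρ × Bool × Bool) :
    commonKernel P s z ≤ ∑ i ∈ s, overlapMark P (z i) * quietKernel P (s.erase i) z := by
  have hnonneg (i) (_ : i ∈ s) : 0 ≤ overlapMark P (z i) * quietKernel P (s.erase i) z :=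
    mul_nonneg (overlapMark_nonneg P _) (quietKernel_nonneg P _ _)
  unfold commonKernel
  split_ifs with h
  swap
  · exact sum_nonneg hnonneg
  obtain ⟨h11, h10, h01⟩ := h
  obtain ⟨i, hi⟩ := card_eq_one.1 h11
  obtain ⟨his, hPi, hzi⟩ : i ∈ s ∧ P (z i).1 ∧ (z i).2 = (true, true) :=
    mem_filter.1 (hi ▸ mem_singleton_self i : i ∈ fullPositions P (true, true) s z)
  have hquiet : ∀ t ∈ s.erase i, P (z t).1 → (z t).2 = (false, false) := fun t ht hPt =>
    snd_eq_false_of_notMem h10 h01 (mem_of_mem_erase ht) hPt (by simp [hi, ne_of_mem_erase ht])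
  refine le_of_eq_of_le ?_ (single_le_sum hnonneg his)
  rw [overlapMark, if_pos (Or.inl ⟨hPi, hzi⟩), one_mul, quietKernel, if_pos hquiet,
    fullPositions_erase P (by simp [fullPositions, hzi])]

lemma splitKernel_mul_le_sum {s : Finset T} {z : T → ρ × Bool × Bool}
    (h11 : fullPositions P (true, true) s z = ∅) (h10 : fullPositions P (true, false) s z = ∅)
    (h01 : fullPositions P (false, true) s z = ∅) :
    twoPowDiv (#(fullPositions P (false, false) s z) + 2) *
        (√(#(positions (true, false) s z)) * √(#(positions (false, true) s z))) ≤
      ∑ i ∈ s, overlapMark P (z i) * quietKernel P (s.erase i) z := by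
  set g := #(fullPositions P (false, false) s z)
  have hcount : ((#(positions (true, false) s z) : ℝ) + #(positions (false, true) s z)) =
      ∑ i ∈ s, if (z i).2.1 ≠ (z i).2.2 then 1 else 0 := by
    simp only [positions, natCast_card_filter, ← sum_add_distrib]
    refine sum_congr rfl fun i _ => ?_
    generalize (z i).2 = q
    rcases q with ⟨_ | _, _ | _⟩ <;> simp
  have hterm (i) (hi : i ∈ s) : (if (z i).2.1 ≠ (z i).2.2 then (1 : ℝ) else 0) *
      twoPowDiv (g + 1) ≤ overlapMark P (z i) * quietKernel P (s.erase i) z := by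
    have hquiet : ∀ t ∈ s, P (z t).1 → (z t).2 = (false, false) := fun t ht hPt =>
      snd_eq_false_of_notMem h10 h01 ht hPt (by simp [h11])
    split_ifs with hne
    · have hPi : ¬P (z i).1 := fun h => hne (by rw [hquiet i hi h])
      rw [one_mul, overlapMark, if_pos (Or.inr ⟨hPi, hne⟩), one_mul, quietKernel,
        if_pos fun t ht => hquiet t (mem_of_mem_erase ht),
        fullPositions_erase P (by simp [fullPositions, hPi])]
    · rw [zero_mul]
      exact mul_nonneg (overlapMark_nonneg P _) (quietKernel_nonneg P _ _)
  calc twoPowDiv (g + 2) * (√(#(positions (true, false) s z)) * √(#(positions (false, true) s z)))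
      ≤ (2 * twoPowDiv (g + 1)) *
          ((#(positions (true, false) s z) + #(positions (false, true) s z)) / 2) :=
        mul_le_mul (twoPowDiv_add_two_le g) (sqrt_mul_sqrt_le (by positivity) (by positivity))
          (by positivity) (mul_nonneg zero_le_two (twoPowDiv_nonneg _))
    _ = ∑ i ∈ s, (if (z i).2.1 ≠ (z i).2.2 then 1 else 0) * twoPowDiv (g + 1) := by
        rw [hcount, ← sum_mul]
        ring
    _ ≤ ∑ i ∈ s, overlapMark P (z i) * quietKernel P (s.erase i) z := sum_le_sum hterm

lemma overlapKernel_le_sum (s : Finset T) (z : T → ρ × Bool × Bool) :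
    overlapKernel P s z ≤ ∑ i ∈ s, overlapMark P (z i) * quietKernel P (s.erase i) z := by
  by_cases h : fullPositions P (true, true) s z = ∅ ∧ fullPositions P (true, false) s z = ∅ ∧
    fullPositions P (false, true) s z = ∅
  · obtain ⟨h11, h10, h01⟩ := h
    simpa [overlapKernel, commonKernel, splitKernel, h11, h10, h01] using
      splitKernel_mul_le_sum P h11 h10 h01
  · have hsplit : overlapKernel P s z = commonKernel P s z := by
      unfold overlapKernel splitKernel
      split_ifs <;> simp_all
    exact hsplit.trans_le (commonKernel_le_sum P s z)

lemma sum_quietMark_mul_le (s : Finset T) (z : T → ρ × Bool × Bool) :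
    ∑ i ∈ s, quietMark P (z i) * quietKernel P (s.erase i) z ≤
      ∏ t ∈ s, quietWeight P (z t) := by
  set F := fullPositions P (false, false) s z with hF
  have hsum : ∑ i ∈ s, quietMark P (z i) * quietKernel P (s.erase i) z =
      ∑ i ∈ F, quietKernel P (s.erase i) z := by
    simp only [quietMark, ite_mul, one_mul, zero_mul, ← sum_filter]
    rfl
  rw [hsum]
  by_cases hquiet : ∀ t ∈ s, P (z t).1 → (z t).2 = (false, false)
  · have hterm (i) (hi : i ∈ F) : quietKernel P (s.erase i) z = twoPowDiv #F := by
      rw [quietKernel, if_pos fun t ht => hquiet t (mem_of_mem_erase ht), fullPositions,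
        filter_erase]
      exact congrArg _ (card_erase_add_one hi)
    have hprod : ∏ t ∈ s, quietWeight P (z t) = 2 ^ #F := by
      rw [hF, fullPositions, ← prod_const, prod_filter]
      refine prod_congr rfl fun t ht => ?_
      by_cases hPt : P (z t).1 <;> simp [quietWeight, hPt, hquiet t ht]
    rw [sum_congr rfl hterm, sum_const, nsmul_eq_mul, hprod]
    exact mul_twoPowDiv_le _
  · push Not at hquiet
    obtain ⟨t, hts, hPt, hzt⟩ := hquiet
    refine (sum_eq_zero fun i hi => ?_).trans_le (prod_nonneg fun t _ => ?_)
    · have hti : t ≠ i := by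
        rintro rfl
        exact hzt (mem_filter.1 hi).2.2
      exact if_neg fun h => hzt (h t (mem_erase.2 ⟨hti, hts⟩) hPt)
    · unfold quietWeight
      split_ifs <;> norm_num

lemma expect_mark_mul_quietKernel [Fintype T] [Fintype ρ] [Nonempty ρ]
    (f : ρ × Bool × Bool → ℝ) (s : Finset T) (i : T) :
    𝔼 z : T → ρ × Bool × Bool, f (z i) * quietKernel P (s.erase i) z =
      (𝔼 a, f a) * 𝔼 z : T → ρ × Bool × Bool, quietKernel P (s.erase i) z := by
  have hf : DependsOn (fun z : T → ρ × Bool × Bool => f (z i)) (({i} : Finset T) : Set T) :=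
    fun _ _ h => congrArg f (h i (by simp))
  rw [expect_mul_of_dependsOn hf, expect_eval]
  intro z z' h
  have heq (t) (ht : t ∈ s.erase i) : z t = z' t := h t (by simpa using ne_of_mem_erase ht)
  have hpos : fullPositions P (false, false) (s.erase i) z =
      fullPositions P (false, false) (s.erase i) z' :=
    filter_congr fun t ht => by rw [heq t ht]
  have hiff : (∀ t ∈ s.erase i, P (z t).1 → (z t).2 = (false, false)) ↔
      ∀ t ∈ s.erase i, P (z' t).1 → (z' t).2 = (false, false) :=
    forall₂_congr fun t ht => by rw [heq t ht]
  simp only [quietKernel, hpos]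
  congr 1
  exact propext hiff

lemma expect_bits [Fintype ρ] (f : ρ × Bool × Bool → ℝ) :
    𝔼 a, f a = 𝔼 r, (f (r, true, true) + f (r, true, false) + f (r, false, true) +
      f (r, false, false)) / 4 := by
  rw [← univ_product_univ, expect_product]
  refine expect_congr rfl fun r _ => ?_
  rw [← univ_product_univ, expect_product]
  simp only [expect_bool]
  ring

section Means

variable [Fintype ρ] [Nonempty ρ] {P} {p : ℝ}

lemma expect_const_add_mul_ite (hp : 𝔼 r, (if P r then (1 : ℝ) else 0) = p) (a b : ℝ) :
    𝔼 r, (a + b * if P r then 1 else 0) = a + b * p := by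
  rw [expect_add_distrib, Fintype.expect_const, ← mul_expect, hp]

lemma expect_overlapMark (hp : 𝔼 r, (if P r then (1 : ℝ) else 0) = p) :
    𝔼 a, overlapMark P a = 1 / 2 + (-1 / 4) * p := by
  rw [expect_bits, ← expect_const_add_mul_ite hp]
  refine expect_congr rfl fun r _ => ?_
  by_cases hr : P r <;> norm_num [overlapMark, hr]

lemma expect_quietMark (hp : 𝔼 r, (if P r then (1 : ℝ) else 0) = p) :
    𝔼 a, quietMark P a = 0 + 1 / 4 * p := by
  rw [expect_bits, ← expect_const_add_mul_ite hp]
  refine expect_congr rfl fun r _ => ?_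
  by_cases hr : P r <;> norm_num [quietMark, hr]

lemma expect_quietWeight (hp : 𝔼 r, (if P r then (1 : ℝ) else 0) = p) :
    𝔼 a, quietWeight P a = 1 + (-1 / 2) * p := by
  rw [expect_bits, ← expect_const_add_mul_ite hp]
  refine expect_congr rfl fun r _ => ?_
  by_cases hr : P r <;> norm_num [quietWeight, hr]

lemma mul_expect_overlapKernel_le [Fintype T] (hp : 𝔼 r, (if P r then (1 : ℝ) else 0) = p)
    (s : Finset T) :
    p * 𝔼 z : T → ρ × Bool × Bool, overlapKernel P s z ≤ (2 - p) * (1 - p / 2) ^ #s := by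
  have hexchange (i) : p * 𝔼 z : T → ρ × Bool × Bool,
        overlapMark P (z i) * quietKernel P (s.erase i) z =
      (2 - p) * 𝔼 z : T → ρ × Bool × Bool, quietMark P (z i) * quietKernel P (s.erase i) z := by
    rw [expect_mark_mul_quietKernel, expect_mark_mul_quietKernel, expect_overlapMark hp,
      expect_quietMark hp]
    ring
  have hp1 : p ≤ 1 := hp ▸ expect_le univ_nonempty fun r _ => by split_ifs <;> norm_num
  have hp0 : 0 ≤ p := hp ▸ expect_nonneg fun r _ => by split_ifs <;> norm_num
  calc p * 𝔼 z : T → ρ × Bool × Bool, overlapKernel P s z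
      ≤ p * 𝔼 z : T → ρ × Bool × Bool,
          ∑ i ∈ s, overlapMark P (z i) * quietKernel P (s.erase i) z :=
        mul_le_mul_of_nonneg_left (expect_le_expect fun z _ => overlapKernel_le_sum P s z) hp0
    _ = (2 - p) * 𝔼 z : T → ρ × Bool × Bool,
          ∑ i ∈ s, quietMark P (z i) * quietKernel P (s.erase i) z := by
        rw [expect_sum_comm, expect_sum_comm, mul_sum, mul_sum]
        exact sum_congr rfl fun i _ => hexchange i
    _ ≤ (2 - p) * 𝔼 z : T → ρ × Bool × Bool,
          ∏ t ∈ s, quietWeight P (z t) :=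
        mul_le_mul_of_nonneg_left (expect_le_expect fun z _ => sum_quietMark_mul_le P s z)
          (by linarith)
    _ = (2 - p) * (1 - p / 2) ^ #s := by
        rw [expect_prod_eval s fun _ => quietWeight P, prod_const, expect_quietWeight hp]
        ring

end Means

end Overlap

section BlockSign

variable {T κ : Type*} {S : Finset κ} {y : κ}

/-- The rows of `s` with ones in all columns of `S`. -/
def fullRows (S : Finset κ) (s : Finset T) (Z : T → κ → Bool) : Finset T :=
  {t ∈ s | AllOnesOn S (Z t)}

/-- If exactly one row of `s` has ones in all columns of `S`, the sign of its entry in column `y`;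
otherwise `0`. -/
def blockSign (y : κ) (S : Finset κ) (s : Finset T) (Z : T → κ → Bool) : ℝ :=
  soleSum (fullRows S s Z) fun t => boolSign (Z t y)

lemma fullRows_subset (S : Finset κ) (s : Finset T) (Z : T → κ → Bool) : fullRows S s Z ⊆ s :=
  filter_subset _ s

lemma fullRows_congr {s : Finset T} {Z Z' : T → κ → Bool}
    (h : ∀ t ∈ s, ∀ j ∈ S, Z t j = Z' t j) : fullRows S s Z = fullRows S s Z' :=
  filter_congr fun t ht => forall₂_congr fun j hj => by rw [h t ht j hj]

lemma dependsOn_fullRows (S : Finset κ) (s : Finset T) :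
    DependsOn (fullRows S s) s :=
  fun _ _ h => fullRows_congr fun t ht _ _ => by rw [h t ht]

lemma blockSign_congr {s : Finset T} {Z Z' : T → κ → Bool}
    (h : ∀ t ∈ s, ∀ j ∈ S, Z t j = Z' t j) (hy : ∀ t ∈ s, Z t y = Z' t y) :
    blockSign y S s Z = blockSign y S s Z' := by
  rw [blockSign, blockSign, fullRows_congr h]
  exact soleSum_congr fun t ht => by rw [hy t (fullRows_subset _ _ _ ht)]

lemma dependsOn_blockSign (y : κ) (S : Finset κ) (s : Finset T) :
    DependsOn (blockSign y S s) s :=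
  fun _ _ h => blockSign_congr (fun t ht _ _ => by rw [h t ht]) fun t ht => by rw [h t ht]

variable [DecidableEq T]

lemma ite_fullRows_eq_empty (s : Finset T) (Z : T → κ → Bool) :
    (if fullRows S s Z = ∅ then (1 : ℝ) else 0) =
      ∏ t ∈ s, if AllOnesOn S (Z t) then (0 : ℝ) else 1 := by
  simp only [← ite_not (AllOnesOn _ _), prod_boole]
  congr 1
  exact propext filter_eq_empty_iff

lemma isColumnwise_piecewise (D : Finset T) (u : T → κ → Bool) :
    IsColumnwise fun v => D.piecewise v u := by
  intro j X Y h t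
  by_cases ht : t ∈ D <;> simp [ht, h]

lemma expect_soleSum_boolSign [Fintype T] (s : Finset T) :
    𝔼 x : T → Bool, soleSum s (fun t => boolSign (x t)) = 0 := by
  unfold soleSum
  split_ifs
  · rw [expect_sum_comm]
    exact sum_eq_zero fun t _ => by rw [expect_eval, expect_boolSign]
  · exact expect_const_zero _

variable [Fintype T] [Fintype κ] [DecidableEq κ]

lemma expect_ite_fullRows_eq_empty (s : Finset T) :
    𝔼 Z : T → κ → Bool, (if fullRows S s Z = ∅ then (1 : ℝ) else 0) =
      (1 - (1 / 2) ^ #S) ^ #s := by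
  have h (r : κ → Bool) : (if AllOnesOn S r then (0 : ℝ) else 1) =
      1 - if AllOnesOn S r then 1 else 0 := by split_ifs <;> norm_num
  simp only [ite_fullRows_eq_empty]
  rw [expect_prod_eval s fun _ r => if AllOnesOn S r then (0 : ℝ) else 1, prod_const]
  simp only [h, expect_sub_distrib, expect_allOnesOn, Fintype.expect_const]

variable (T) in
/-- Products of block signs over disjoint blocks have small correlation with cylinder products. -/
def BlockSignBound (y : κ) (S : Finset κ) : Prop :=
  ∀ (β : Type) (B : Finset β) (s : β → Finset T) (χ : (T → κ → Bool) → ℝ),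
    (B : Set β).PairwiseDisjoint s → IsCylinderProduct (insert y S) χ →
    |𝔼 Z, (∏ b ∈ B, blockSign y S (s b) Z) * χ Z| ≤
      ∏ b ∈ B, √(#(s b)) * (1 - (1 / 2) ^ #S) ^ #(s b)

lemma BlockSignBound.abs_expect_mul_le (h : BlockSignBound T y S) {β : Type} {B : Finset β}
    {s : β → Finset T} {χ c : (T → κ → Bool) → ℝ} (hs : (B : Set β).PairwiseDisjoint s)
    (hχ : IsCylinderProduct (insert y S) χ) (hc : ∀ Z, 0 ≤ c Z)
    (hcB : DependsOn c ((B.biUnion s : Finset T) : Set T)ᶜ) :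
    |𝔼 Z, c Z * (∏ b ∈ B, blockSign y S (s b) Z) * χ Z| ≤
      𝔼 Z, c Z * ∏ b ∈ B, (√(#(s b)) * if fullRows S (s b) Z = ∅ then 1 else 0) := by
  set D := B.biUnion s
  have hmem {b} (hb : b ∈ B) {t} (ht : t ∈ s b) : t ∈ D := mem_biUnion.2 ⟨b, hb, ht⟩
  have hsign (u v : T → κ → Bool) : ∏ b ∈ B, blockSign y S (s b) (D.piecewise v u) =
      ∏ b ∈ B, blockSign y S (s b) v :=
    prod_congr rfl fun b hb => dependsOn_blockSign y S (s b) fun t ht =>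
      D.piecewise_eq_of_mem v u (hmem hb ht)
  have hcu (u v : T → κ → Bool) : c (D.piecewise v u) = c u :=
    hcB fun t ht => D.piecewise_eq_of_notMem v u ht
  have hdep : DependsOn
      (fun Z => ∏ b ∈ B, (√(#(s b)) * if fullRows S (s b) Z = ∅ then 1 else 0)) D := by
    refine dependsOn_prod fun b hb Z Z' hZ => ?_
    rw [dependsOn_fullRows S (s b) fun t ht => hZ t (hmem hb ht)]
  have hblocks : 𝔼 Z : T → κ → Bool,
      ∏ b ∈ B, (√(#(s b)) * if fullRows S (s b) Z = ∅ then (1 : ℝ) else 0) =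
        ∏ b ∈ B, √(#(s b)) * (1 - (1 / 2) ^ #S) ^ #(s b) := by
    rw [expect_prod_of_dependsOn hs fun b _ Z Z' hZ => by rw [dependsOn_fullRows S (s b) hZ]]
    simp only [← mul_expect, expect_ite_fullRows_eq_empty]
  calc |𝔼 Z, c Z * (∏ b ∈ B, blockSign y S (s b) Z) * χ Z|
      = |𝔼 u, c u * 𝔼 v, (∏ b ∈ B, blockSign y S (s b) v) * χ (D.piecewise v u)| := by
        rw [← expect_piecewise D, expect_comm]
        simp only [hsign, hcu, mul_expect, mul_assoc]
    _ ≤ 𝔼 u, c u * ∏ b ∈ B, √(#(s b)) * (1 - (1 / 2) ^ #S) ^ #(s b) := by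
        refine (abs_expect_le _ _).trans (expect_le_expect fun u _ => ?_)
        rw [abs_mul, abs_of_nonneg (hc u)]
        exact mul_le_mul_of_nonneg_left (h β B s _ hs (hχ.comp (isColumnwise_piecewise D u))) (hc u)
    _ = _ := by
        rw [← expect_mul, ← hblocks, mul_comm, ← expect_mul_of_dependsOn hdep hcB]
        simp only [mul_comm]

end BlockSign

section BlockSignInduction

variable {T κ : Type*} {S : Finset κ} {y j : κ}

/-- The block sign after the rows of `s` have been restricted to the ones selected by `x`. -/
def selectedSign (y : κ) (S : Finset κ) (s : Finset T) (x : T → Bool) (Z : T → κ → Bool) : ℝ :=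
  soleSum {t ∈ fullRows S s Z | x t} fun t => boolSign (Z t y)

lemma blockSign_setColumn [DecidableEq κ] (hj : j ∉ S) (hy : y ≠ j) (s : Finset T)
    (x : T → Bool) (Z : T → κ → Bool) :
    blockSign y (insert j S) s (setColumn j x Z) = selectedSign y S s x Z := by
  have h : fullRows (insert j S) s (setColumn j x Z) = {t ∈ fullRows S s Z | x t} := by
    rw [fullRows, fullRows, filter_filter]
    exact filter_congr fun t _ => allOnesOn_insert_update hj (Z t) (x t)
  simp only [blockSign, selectedSign, h, setColumn, update_of_ne hy]

/-- The rows of `Z`, each together with a pair of candidates for the entry in a new column. -/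
def withBits (Z : T → κ → Bool) (x x' : T → Bool) : T → (κ → Bool) × Bool × Bool :=
  fun t => (Z t, x t, x' t)

lemma fullRows_positions (q : Bool × Bool) (s : Finset T) (Z : T → κ → Bool) (x x' : T → Bool) :
    fullRows S (positions q s (withBits Z x x')) Z =
      fullPositions (AllOnesOn S) q s (withBits Z x x') := by
  rw [fullRows, positions, filter_filter]
  exact filter_congr fun t _ => and_comm

lemma fullPositions_withBits_congr {q : Bool × Bool} {s : Finset T} {Z Z' : T → κ → Bool}
    {x x' : T → Bool} (h : ∀ t ∈ s, (x t, x' t) = q → Z t = Z' t) :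
    fullPositions (AllOnesOn S) q s (withBits Z x x') =
      fullPositions (AllOnesOn S) q s (withBits Z' x x') := by
  refine filter_congr fun t ht => and_congr_left fun hq => ?_
  simp only [withBits, h t ht hq]

lemma card_fullRows_eq_add (s : Finset T) (x x' : T → Bool) (Z : T → κ → Bool) :
    #(fullRows S s Z) =
      #(fullPositions (AllOnesOn S) (true, true) s (withBits Z x x')) +
        #(fullPositions (AllOnesOn S) (true, false) s (withBits Z x x')) +
        #(fullPositions (AllOnesOn S) (false, true) s (withBits Z x x')) +
        #(fullPositions (AllOnesOn S) (false, false) s (withBits Z x x')) := by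
  rw [fullRows, card_eq_sum_card_fiberwise (f := fun t => (x t, x' t)) (t := univ)
    fun _ _ => mem_coe.2 (mem_univ _)]
  simp only [filter_filter, Fintype.sum_prod_type, Fintype.sum_bool, ← add_assoc]
  rfl

lemma pairwiseDisjoint_filter_eq {β γ δ : Type*} [DecidableEq γ] {A : Set β} {s : β → Finset T}
    (hs : A.PairwiseDisjoint s) (f : T → γ) {e : δ → γ} (he : Injective e) :
    (A ×ˢ (Set.univ : Set δ)).PairwiseDisjoint fun p => {t ∈ s p.1 | f t = e p.2} := by
  rintro ⟨b, d⟩ hb ⟨b', d'⟩ hb' hne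
  refine disjoint_left.2 fun t ht ht' => hne ?_
  rw [mem_filter] at ht ht'
  exact Prod.ext (hs.elim_finset hb.1 hb'.1 t ht.1 ht'.1) (he (ht.2.symm.trans ht'.2))

variable [DecidableEq T]

lemma blockSignBound_empty [Fintype T] [Fintype κ] [DecidableEq κ] (y : κ) :
    BlockSignBound T y ∅ := by
  intro β B s χ hs hχ
  rcases B.eq_empty_or_nonempty with rfl | ⟨b, hb⟩
  · simpa using (abs_expect_le _ _).trans (expect_le univ_nonempty fun Z _ => hχ.abs_le_one Z)
  suffices 𝔼 Z, (∏ b ∈ B, blockSign y ∅ (s b) Z) * χ Z = 0 by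
    rw [this, abs_zero]
    exact prod_nonneg fun b _ => mul_nonneg (Real.sqrt_nonneg _) (pow_nonneg (by simp) _)
  obtain ⟨φ, ψ, -, hφ, ⟨_, -, -, hψ⟩, hχ⟩ := hχ.exists_eq_mul (notMem_empty y)
  have hcol (x : T → Bool) (Z) (s : Finset T) :
      blockSign y ∅ s (setColumn y x Z) = soleSum s fun t => boolSign (x t) := by
    simp [blockSign, fullRows, AllOnesOn, setColumn]
  rw [← expect_setColumn y]
  simp only [hcol, hχ, hψ, prod_empty, mul_one, hφ.apply_setColumn, ← expect_mul]
  rw [expect_prod_of_dependsOn hs, prod_eq_zero hb (expect_soleSum_boolSign _)]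
  · simp
  · intro b _ x x' hx
    exact soleSum_congr fun t ht => congrArg boolSign (hx t ht)

lemma soleSum_union_mul_soleSum_union {F G H : Finset T} (hFG : Disjoint F G) (hFH : Disjoint F H)
    {σ : T → ℝ} (hσ : ∀ t, σ t ^ 2 = 1) :
    soleSum (F ∪ G) σ * soleSum (F ∪ H) σ =
      (if #F = 1 ∧ G = ∅ ∧ H = ∅ then 1 else 0) +
        if F = ∅ then soleSum G σ * soleSum H σ else 0 := by
  rw [soleSum_union hFG, soleSum_union hFH]
  rcases F.eq_empty_or_nonempty with rfl | hF
  · simp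
  · simp only [hF.ne_empty, if_false, add_zero]
    by_cases hG : G = ∅ <;> by_cases hH : H = ∅ <;> simp [hG, hH, ← sq, soleSum_sq hσ]

lemma filter_fullRows_fst (s : Finset T) (x x' : T → Bool) (Z : T → κ → Bool) :
    {t ∈ fullRows S s Z | x t} =
      fullPositions (AllOnesOn S) (true, true) s (withBits Z x x') ∪
        fullPositions (AllOnesOn S) (true, false) s (withBits Z x x') := by
  ext t
  simp only [fullRows, fullPositions, withBits, mem_filter, mem_union, Prod.mk.injEq]
  cases x t <;> cases x' t <;> simp

lemma filter_fullRows_snd (s : Finset T) (x x' : T → Bool) (Z : T → κ → Bool) :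
    {t ∈ fullRows S s Z | x' t} =
      fullPositions (AllOnesOn S) (true, true) s (withBits Z x x') ∪
        fullPositions (AllOnesOn S) (false, true) s (withBits Z x x') := by
  ext t
  simp only [fullRows, fullPositions, withBits, mem_filter, mem_union, Prod.mk.injEq]
  cases x t <;> cases x' t <;> simp

lemma twoPowDiv_mul_selectedSign (s : Finset T) (x x' : T → Bool) (Z : T → κ → Bool) :
    twoPowDiv #(fullRows S s Z) * (selectedSign y S s x Z * selectedSign y S s x' Z) =
      commonKernel (AllOnesOn S) s (withBits Z x x') +
        splitKernel (AllOnesOn S) s (withBits Z x x') *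
          (blockSign y S (positions (true, false) s (withBits Z x x')) Z *
            blockSign y S (positions (false, true) s (withBits Z x x')) Z) := by
  simp only [selectedSign, blockSign, filter_fullRows_fst s x x', filter_fullRows_snd s x x',
    fullRows_positions, commonKernel, splitKernel]
  rw [soleSum_union_mul_soleSum_union (disjoint_fullPositions _ (by simp) s _)
    (disjoint_fullPositions _ (by simp) s _) fun t => boolSign_sq _, mul_add,
    card_fullRows_eq_add s x x']
  congr 1
  · split_ifs with h
    · simp [h, add_comm]
    · simp
  split_ifs with h
  swap
  · simp
  by_cases hsole : #(fullPositions (AllOnesOn S) (true, false) s (withBits Z x x')) = 1 ∧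
      #(fullPositions (AllOnesOn S) (false, true) s (withBits Z x x')) = 1
  · rw [h, hsole.1, hsole.2, card_empty, add_comm]
  · rw [soleSum_mul_soleSum_eq_zero hsole, mul_zero, mul_zero]

lemma dependsOn_commonKernel {s : Finset T} {x x' : T → Bool} {D : Set T}
    (hD : ∀ t ∈ s, t ∈ D) :
    DependsOn (fun Z => commonKernel (AllOnesOn S) s (withBits Z x x')) D := by
  intro Z Z' hZ
  have h (q) : fullPositions (AllOnesOn S) q s (withBits Z x x') =
      fullPositions (AllOnesOn S) q s (withBits Z' x x') :=
    fullPositions_withBits_congr fun t ht _ => hZ t (hD t ht)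
  simp only [commonKernel, h]

lemma dependsOn_splitKernel {s : Finset T} {x x' : T → Bool} {D : Set T}
    (hD : ∀ t ∈ s, x t = x' t → t ∈ D) :
    DependsOn (fun Z => splitKernel (AllOnesOn S) s (withBits Z x x')) D := by
  intro Z Z' hZ
  have h (u) : fullPositions (AllOnesOn S) (u, u) s (withBits Z x x') =
      fullPositions (AllOnesOn S) (u, u) s (withBits Z' x x') :=
    fullPositions_withBits_congr fun t ht hq =>
      hZ t (hD t ht ((Prod.mk.inj hq).1.trans (Prod.mk.inj hq).2.symm))
  simp only [splitKernel, h]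

variable [Fintype T] [Fintype κ] [DecidableEq κ]

lemma BlockSignBound.abs_expect_kernel_le (h : BlockSignBound T y S) {β : Type} [DecidableEq β]
    {B E : Finset β} {s : β → Finset T} {χ : (T → κ → Bool) → ℝ}
    (hs : (B : Set β).PairwiseDisjoint s) (hχ : IsCylinderProduct (insert y S) χ)
    (x x' : T → Bool) (hE : E ⊆ B) :
    |𝔼 Z, (∏ b ∈ E, commonKernel (AllOnesOn S) (s b) (withBits Z x x')) *
        (∏ b ∈ B \ E, splitKernel (AllOnesOn S) (s b) (withBits Z x x') *
          (blockSign y S (positions (true, false) (s b) (withBits Z x x')) Z *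
            blockSign y S (positions (false, true) (s b) (withBits Z x x')) Z)) * χ Z| ≤
      𝔼 Z, (∏ b ∈ E, commonKernel (AllOnesOn S) (s b) (withBits Z x x')) *
        ∏ b ∈ B \ E, splitKernel (AllOnesOn S) (s b) (withBits Z x x') *
          ((√(#(positions (true, false) (s b) (withBits Z x x'))) *
              if fullPositions (AllOnesOn S) (true, false) (s b) (withBits Z x x') = ∅
              then 1 else 0) *
            (√(#(positions (false, true) (s b) (withBits Z x x'))) *
              if fullPositions (AllOnesOn S) (false, true) (s b) (withBits Z x x') = ∅
              then 1 else 0)) := by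
  let s' (p : β × Bool) : Finset T := {t ∈ s p.1 | (x t, x' t) = (p.2, !p.2)}
  let c (Z : T → κ → Bool) : ℝ := (∏ b ∈ E, commonKernel (AllOnesOn S) (s b) (withBits Z x x')) *
    ∏ b ∈ B \ E, splitKernel (AllOnesOn S) (s b) (withBits Z x x')
  have hs' : (((B \ E) ×ˢ univ : Finset (β × Bool)) : Set (β × Bool)).PairwiseDisjoint s' := by
    rw [coe_product, coe_univ]
    exact pairwiseDisjoint_filter_eq (hs.subset (coe_subset.2 sdiff_subset)) _
      (e := fun u => (u, !u)) fun u u' h => congrArg Prod.fst h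
  have hc : DependsOn c ((((B \ E) ×ˢ univ).biUnion s' : Finset T) : Set T)ᶜ := by
    have hrow {b} (hb : b ∈ B) {t} (ht : t ∈ s b) (h : b ∈ E ∨ x t = x' t) :
        t ∈ (((B \ E) ×ˢ univ).biUnion s' : Set T)ᶜ := by
      intro hD
      obtain ⟨⟨b', u⟩, hb', ht'⟩ := mem_biUnion.1 (mem_coe.1 hD)
      simp only [mem_product, mem_sdiff, s', mem_filter, Prod.mk.injEq] at hb' ht'
      obtain rfl := hs.elim_finset hb hb'.1.1 t ht ht'.1
      rcases h with h | h
      · exact hb'.1.2 h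
      · simp [ht'.2.1, ht'.2.2] at h
    have hcommon := dependsOn_prod fun b hb =>
      dependsOn_commonKernel (S := S) (x := x) (x' := x') fun t ht => hrow (hE hb) ht (Or.inl hb)
    have hsplit := dependsOn_prod (B := B \ E) fun b hb => dependsOn_splitKernel (S := S)
      fun t ht hx => hrow (mem_sdiff.1 hb).1 ht (Or.inr hx)
    exact fun Z Z' hZ => congrArg₂ (· * ·) (hcommon hZ) (hsplit hZ)
  have hc0 (Z) : 0 ≤ c Z := mul_nonneg (prod_nonneg fun b _ => commonKernel_nonneg _ _ _)
    (prod_nonneg fun b _ => splitKernel_nonneg _ _ _)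
  have hbound := h.abs_expect_mul_le hs' hχ hc0 hc
  simp only [prod_product, Fintype.prod_bool, c] at hbound
  simp only [← fullRows_positions, prod_mul_distrib, mul_assoc] at hbound ⊢
  exact hbound

lemma BlockSignBound.abs_expect_twoPowDiv_le (h : BlockSignBound T y S) {β : Type} {B : Finset β}
    {s : β → Finset T} {χ : (T → κ → Bool) → ℝ} (hs : (B : Set β).PairwiseDisjoint s)
    (hχ : IsCylinderProduct (insert y S) χ) (x x' : T → Bool) :
    |𝔼 Z, (∏ b ∈ B, twoPowDiv #(fullRows S (s b) Z) *
        (selectedSign y S (s b) x Z * selectedSign y S (s b) x' Z)) * χ Z| ≤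
      𝔼 Z, ∏ b ∈ B, overlapKernel (AllOnesOn S) (s b) (withBits Z x x') := by
  classical
  simp only [twoPowDiv_mul_selectedSign, overlapKernel, prod_add, sum_mul, expect_sum_comm]
  exact (abs_sum_le_sum_abs _ _).trans
    (sum_le_sum fun E hE => h.abs_expect_kernel_le hs hχ x x' (mem_powerset.1 hE))

end BlockSignInduction

section BlockSignStep

variable {T κ : Type*} [DecidableEq T] {S : Finset κ} {y j : κ}

lemma dependsOn_overlapKernel {ρ : Type*} (P : ρ → Prop) [DecidablePred P] (s : Finset T) :
    DependsOn (overlapKernel P s) s := by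
  intro z z' h
  have hfull (q) : fullPositions P q s z = fullPositions P q s z' :=
    filter_congr fun t ht => by rw [h t ht]
  have hpos (q) : positions q s z = positions q s z' := filter_congr fun t ht => by rw [h t ht]
  simp only [overlapKernel, commonKernel, splitKernel, hfull, hpos]

lemma card_fullRows_div_two_pow (s : Finset T) (Z : T → κ → Bool) :
    (#(fullRows S s Z) : ℝ) / 2 ^ #(fullRows S s Z) =
      markedSum (fun r => if AllOnesOn S r then 1 / 2 else 0)
        (fun r => if AllOnesOn S r then 1 / 2 else 1) s Z := by
  have hterm (i) (hi : i ∈ s) : (if AllOnesOn S (Z i) then (1 / 2 : ℝ) else 0) *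
      ∏ t ∈ s.erase i, (if AllOnesOn S (Z t) then (1 / 2 : ℝ) else 1) =
        if AllOnesOn S (Z i) then (1 / 2) ^ #(fullRows S s Z) else 0 := by
    split_ifs with h
    · have := mul_prod_erase s (fun t => if AllOnesOn S (Z t) then (1 / 2 : ℝ) else 1) hi
      rw [if_pos h] at this
      rw [this, ← prod_filter, prod_const]
      rfl
    · exact zero_mul _
  rw [markedSum, sum_congr rfl hterm, ← sum_filter, sum_const, nsmul_eq_mul, one_div, inv_pow]
  rfl

lemma overlapKernel_nonneg {ρ : Type*} (P : ρ → Prop) [DecidablePred P] (s : Finset T)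
    (z : T → ρ × Bool × Bool) : 0 ≤ overlapKernel P s z :=
  add_nonneg (commonKernel_nonneg P s z) (mul_nonneg (splitKernel_nonneg P s z) (by positivity))

variable [Fintype T]

lemma expect_arrow_prod {α γ : Type*} [Fintype α] [Fintype γ] (G : (T → α × γ) → ℝ) :
    𝔼 z, G z = 𝔼 a : T → α, 𝔼 b : T → γ, G fun t => (a t, b t) := by
  rw [Fintype.expect_equiv (Equiv.arrowProdEquivProdArrow T (fun _ => α) fun _ => γ) G
    (fun p => G fun t => (p.1 t, p.2 t)) fun z => rfl]
  exact expect_product univ univ fun p : (T → α) × (T → γ) => G fun t => (p.1 t, p.2 t)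

variable [Fintype κ] [DecidableEq κ]

lemma expect_withBits (G : (T → (κ → Bool) × Bool × Bool) → ℝ) :
    𝔼 x, 𝔼 x', 𝔼 Z, G (withBits Z x x') = 𝔼 z, G z := by
  rw [expect_congr rfl fun x _ => expect_comm _ _ _, expect_comm]
  simp only [expect_arrow_prod (α := κ → Bool), expect_arrow_prod (α := Bool)]
  rfl

lemma expect_card_fullRows_div_two_pow (s : Finset T) :
    𝔼 Z : T → κ → Bool, (#(fullRows S s Z) : ℝ) / 2 ^ #(fullRows S s Z) =
      #s * ((1 / 2) ^ #S / 2) * (1 - (1 / 2) ^ #S / 2) ^ (#s - 1) := by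
  have hhalf (r : κ → Bool) : (if AllOnesOn S r then (1 / 2 : ℝ) else 0) =
      (if AllOnesOn S r then 1 else 0) / 2 := by split_ifs <;> norm_num
  have hrest (r : κ → Bool) : (if AllOnesOn S r then (1 / 2 : ℝ) else 1) =
      1 - (if AllOnesOn S r then 1 else 0) / 2 := by split_ifs <;> norm_num
  simp only [card_fullRows_div_two_pow, expect_markedSum, hhalf, hrest, expect_sub_distrib,
    Fintype.expect_const, ← expect_div, expect_allOnesOn]

lemma BlockSignBound.expect_twoPowDiv_mul_sq_le (h : BlockSignBound T y S) {β : Type}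
    {B : Finset β} {s : β → Finset T} {ψ : (T → Bool) → (T → κ → Bool) → ℝ}
    (hs : (B : Set β).PairwiseDisjoint s) (hψ : ∀ x, IsCylinderProduct (insert y S) (ψ x)) :
    𝔼 Z, (∏ b ∈ B, twoPowDiv #(fullRows S (s b) Z)) *
        (𝔼 x, (∏ b ∈ B, selectedSign y S (s b) x Z) * ψ x Z) ^ 2 ≤
      ∏ b ∈ B, (2 - (1 / 2) ^ #S) * (1 - (1 / 2) ^ #S / 2) ^ #(s b) / (1 / 2) ^ #S := by
  calc 𝔼 Z, (∏ b ∈ B, twoPowDiv #(fullRows S (s b) Z)) *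
        (𝔼 x, (∏ b ∈ B, selectedSign y S (s b) x Z) * ψ x Z) ^ 2
      = 𝔼 x, 𝔼 x', 𝔼 Z, (∏ b ∈ B, twoPowDiv #(fullRows S (s b) Z) *
          (selectedSign y S (s b) x Z * selectedSign y S (s b) x' Z)) * (ψ x Z * ψ x' Z) := by
        simp only [sq, Fintype.expect_mul_expect]
        simp only [mul_expect]
        rw [expect_comm]
        refine expect_congr rfl fun x _ => ?_
        rw [expect_comm]
        refine expect_congr rfl fun x' _ => expect_congr rfl fun Z _ => ?_
        simp only [prod_mul_distrib]
        ring
    _ ≤ 𝔼 x, 𝔼 x', 𝔼 Z, ∏ b ∈ B, overlapKernel (AllOnesOn S) (s b) (withBits Z x x') := by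
        refine expect_le_expect fun x _ => expect_le_expect fun x' _ => ?_
        exact (le_abs_self _).trans (h.abs_expect_twoPowDiv_le hs ((hψ x).mul (hψ x')) x x')
    _ = ∏ b ∈ B, 𝔼 z : T → (κ → Bool) × Bool × Bool, overlapKernel (AllOnesOn S) (s b) z := by
        rw [expect_withBits fun z => ∏ b ∈ B, overlapKernel (AllOnesOn S) (s b) z]
        exact expect_prod_of_dependsOn hs fun b _ => dependsOn_overlapKernel _ _
    _ ≤ _ := by
        refine prod_le_prod (fun b _ => expect_nonneg fun z _ => overlapKernel_nonneg _ _ _)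
          fun b _ => ?_
        rw [le_div_iff₀' (by positivity)]
        exact mul_expect_overlapKernel_le (expect_allOnesOn S) (s b)

lemma sq_mul_le_prod_mul_prod_twoPowDiv {β : Type*} {B : Finset β} {m : β → ℕ} {u v : ℝ}
    (hu : |u| ≤ 1) (hv : (∃ b ∈ B, m b = 0) → v = 0) :
    (u * v) ^ 2 ≤ (∏ b ∈ B, (m b : ℝ) / 2 ^ m b) * ((∏ b ∈ B, twoPowDiv (m b)) * v ^ 2) := by
  by_cases hm : ∃ b ∈ B, m b = 0
  · simp [hv hm]
  push Not at hm
  rw [← mul_assoc, ← prod_mul_distrib, mul_pow, prod_eq_one fun b hb => ?_]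
  · gcongr
    exact (sq_le_one_iff_abs_le_one _).2 hu
  · have := hm b hb
    rw [twoPowDiv]
    field_simp

lemma mul_mul_pow_div_eq_sq {p : ℝ} (hp : p ≠ 0) (r : ℕ) :
    r * (p / 2) * (1 - p / 2) ^ (r - 1) * ((2 - p) * (1 - p / 2) ^ r / p) =
      (√r * (1 - p / 2) ^ r) ^ 2 := by
  rw [mul_pow, Real.sq_sqrt (Nat.cast_nonneg _)]
  rcases r with _ | r
  · simp
  · rw [Nat.add_sub_cancel]
    field_simp
    ring

lemma BlockSignBound.insert_column (h : BlockSignBound T y S) (hj : j ∉ S) (hy : y ≠ j) :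
    BlockSignBound T y (insert j S) := by
  intro β B s χ hs hχ
  rw [insert_comm] at hχ
  obtain ⟨φ, ψ, hφ, hφj, hψ, hχ⟩ := hχ.exists_eq_mul (by simp [hj, hy.symm])
  let I (Z : T → κ → Bool) := 𝔼 x, (∏ b ∈ B, selectedSign y S (s b) x Z) * ψ (setColumn j x Z)
  have hI : 𝔼 Z, (∏ b ∈ B, blockSign y (insert j S) (s b) Z) * χ Z = 𝔼 Z, φ Z * I Z := by
    rw [← expect_setColumn j]
    simp only [blockSign_setColumn hj hy, hχ, hφj.apply_setColumn, I, mul_expect]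
    simp only [mul_left_comm]
  have hsq (Z) : (φ Z * I Z) ^ 2 ≤
      (∏ b ∈ B, (#(fullRows S (s b) Z) : ℝ) / 2 ^ #(fullRows S (s b) Z)) *
        ((∏ b ∈ B, twoPowDiv #(fullRows S (s b) Z)) * I Z ^ 2) := by
    refine sq_mul_le_prod_mul_prod_twoPowDiv (hφ Z) fun ⟨b, hb, hb0⟩ => expect_eq_zero fun x _ => ?_
    rw [prod_eq_zero hb (by simp [selectedSign, card_eq_zero.1 hb0]), zero_mul]
  -- Cauchy–Schwarz with weight `∏ m / 2 ^ m`, where `m` counts the full rows of a block, loses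
  -- little because `m / 2 ^ m` is the mean square of `selectedSign` over the selection `x`.
  have hCS := sq_expect_le_of_sq_le_mul (fun Z => prod_nonneg fun b _ => by positivity)
    (fun Z => mul_nonneg (prod_nonneg fun b _ => twoPowDiv_nonneg _) (sq_nonneg _)) hsq
  set p : ℝ := (1 / 2) ^ #S with hp
  have hp0 : 0 < p := by positivity
  have hp1 : p ≤ 1 := pow_le_one₀ (by norm_num) (by norm_num)
  have hcard : (1 / 2 : ℝ) ^ #(insert j S) = p / 2 := by
    rw [card_insert_of_notMem hj, pow_succ, mul_one_div]
  rw [hI, hcard]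
  refine abs_le_of_sq_le_sq (hCS.trans ?_)
    (prod_nonneg fun b _ => mul_nonneg (Real.sqrt_nonneg _) (pow_nonneg (by linarith) _))
  rw [expect_prod_of_dependsOn hs fun b _ Z Z' hZ => by rw [dependsOn_fullRows S _ hZ], ← prod_pow]
  simp only [expect_card_fullRows_div_two_pow, ← hp]
  refine (mul_le_mul_of_nonneg_left (h.expect_twoPowDiv_mul_sq_le hs fun x =>
    hψ.comp (isColumnwise_setColumn j x)) (prod_nonneg fun b _ => ?_)).trans_eq ?_
  · have : 0 ≤ 1 - p / 2 := by linarith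
    positivity
  rw [← prod_mul_distrib]
  exact prod_congr rfl fun b _ => mul_mul_pow_div_eq_sq hp0.ne' _

theorem blockSignBound (T : Type*) [Fintype T] [DecidableEq T] (hy : y ∉ S) :
    BlockSignBound T y S := by
  induction S using Finset.induction with
  | empty => exact blockSignBound_empty y
  | insert j S hj ih =>
    rw [mem_insert, not_or] at hy
    exact (ih hy.2).insert_column hj hy.1

end BlockSignStep

section MarkedSum

variable {ι α : Type*} [DecidableEq ι]

lemma markedSum_congr {p p' q q' : α → ℝ} {s : Finset ι} {z z' : ι → α}
    (hp : ∀ i ∈ s, p (z i) = p' (z' i)) (hq : ∀ i ∈ s, q (z i) = q' (z' i)) :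
    markedSum p q s z = markedSum p' q' s z' :=
  sum_congr rfl fun i hi => congrArg₂ (· * ·) (hp i hi)
    (prod_congr rfl fun t ht => hq t (mem_of_mem_erase ht))

lemma markedSum_eq_prod_mul {p q : α → ℝ} {s s' : Finset ι} {z : ι → α} (hs : s' ⊆ s)
    (hp : ∀ i ∈ s \ s', p (z i) = 0) :
    markedSum p q s z = (∏ t ∈ s \ s', q (z t)) * markedSum p q s' z := by
  rw [markedSum, markedSum, mul_sum, ← sum_sdiff hs,
    sum_eq_zero fun i hi => by rw [hp i hi, zero_mul], zero_add]
  refine sum_congr rfl fun i hi => ?_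
  have : s.erase i \ s'.erase i = s \ s' := by
    ext t
    simp only [mem_sdiff, mem_erase]
    grind
  rw [← prod_sdiff (erase_subset_erase i hs), this]
  ring

lemma dependsOn_mul_prod_sdiff {β : Type*} {A : Finset β} {s s' : β → Finset ι}
    {c : (ι → α) → ℝ} (hs : (A : Set β).PairwiseDisjoint s) (hs' : ∀ b, s' b ⊆ s b)
    (hc : DependsOn c ((A.biUnion s : Finset ι) : Set ι)ᶜ) (g : α → ℝ) :
    DependsOn (fun z => c z * ∏ b ∈ A, ∏ t ∈ s b \ s' b, g (z t))
      ((A.biUnion s' : Finset ι) : Set ι)ᶜ := by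
  intro z z' h
  have hrow {b} (hb : b ∈ A) {t} (ht : t ∈ s b \ s' b) : z t = z' t := by
    obtain ⟨hts, hts'⟩ := mem_sdiff.1 ht
    refine h t fun hmem => ?_
    obtain ⟨d, hd, htd⟩ := mem_biUnion.1 (mem_coe.1 hmem)
    obtain rfl := hs.elim_finset hd hb t (hs' d htd) hts
    exact hts' htd
  have hcz : c z = c z' := hc fun t ht => h t fun hmem => ht (biUnion_mono (fun b _ => hs' b) hmem)
  dsimp only
  rw [hcz, prod_congr rfl fun b hb => prod_congr rfl fun t ht => congrArg g (hrow hb ht)]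

end MarkedSum

section BlockWeight

variable {T κ : Type*} {S : Finset κ} {y : κ}
  {N : (κ → Bool) → Prop} [DecidablePred N]

/-- The matrix with the columns of `V` in `S` and the columns of `W` outside `S`. -/
def glueColumns [DecidableEq κ] (S : Finset κ) (V W : T → κ → Bool) : T → κ → Bool :=
  fun t => S.piecewise (V t) (W t)

section Glue

variable [DecidableEq κ]

lemma glueColumns_of_mem {j : κ} (hj : j ∈ S) (V W : T → κ → Bool) (t : T) :
    glueColumns S V W t j = V t j :=
  piecewise_eq_of_mem _ _ _ hj

lemma glueColumns_of_notMem {j : κ} (hj : j ∉ S) (V W : T → κ → Bool) (t : T) :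
    glueColumns S V W t j = W t j :=
  piecewise_eq_of_notMem _ _ _ hj

lemma isColumnwise_glueColumns (S : Finset κ) (W : T → κ → Bool) :
    IsColumnwise fun V => glueColumns S V W := by
  intro j X Y h t
  by_cases hj : j ∈ S <;> simp [glueColumns, hj, h]

lemma expect_glueColumns [Fintype T] [DecidableEq T] [Fintype κ] (S : Finset κ)
    (f : (T → κ → Bool) → ℝ) : 𝔼 W, 𝔼 V, f (glueColumns S V W) = 𝔼 X, f X :=
  (expect_comm _ _ _).trans <| expect_expect_fst_of_involutive
    (σ := fun p : (T → κ → Bool) × (T → κ → Bool) =>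
      (glueColumns S p.1 p.2, glueColumns S p.2 p.1))
    (fun p => by ext t j <;> by_cases hj : j ∈ S <;> simp [glueColumns, hj]) f

end Glue

variable [Fintype κ] [DecidableEq κ] [DecidableEq T]

/-- The weight of the ways to choose in `s` a row with ones outside column `y`, weighted by `f` of
its entry in column `y`, such that all the other rows of `s` satisfy `N`. -/
def blockWeight (y : κ) (N : (κ → Bool) → Prop) [DecidablePred N] (f : Bool → ℝ) (s : Finset T)
    (X : T → κ → Bool) : ℝ :=
  markedSum (fun r => if AllOnesOn {y}ᶜ r then f (r y) else 0) (fun r => if N r then 1 else 0) s X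

lemma allOnesOn_compl_singleton_iff (hy : y ∉ S) (r : κ → Bool) :
    AllOnesOn {y}ᶜ r ↔ AllOnesOn (insert y S)ᶜ r ∧ AllOnesOn S r := by
  simp only [AllOnesOn, mem_compl, mem_singleton, mem_insert]
  grind

lemma blockWeight_boolSign (hy : y ∉ S)
    (hN : ∀ r, AllOnesOn (insert y S)ᶜ r → (N r ↔ ¬ AllOnesOn S r)) (s : Finset T)
    (X : T → κ → Bool) :
    blockWeight y N boolSign s X =
      (∏ t ∈ s \ fullRows (insert y S)ᶜ s X, if N (X t) then 1 else 0) *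
        blockSign y S (fullRows (insert y S)ᶜ s X) X := by
  have hmem {t} (ht : t ∈ fullRows (insert y S)ᶜ s X) : AllOnesOn (insert y S)ᶜ (X t) :=
    (mem_filter.1 ht).2
  rw [blockWeight, markedSum_eq_prod_mul (fullRows_subset (insert y S)ᶜ s X) fun t ht => ?_]
  · congr 1
    refine Eq.trans ?_
      (soleSum_filter_eq_markedSum (AllOnesOn S) (fun r => boolSign (r y)) _ _).symm
    refine markedSum_congr (fun t ht => ?_) fun t ht => ?_
    · simp only [allOnesOn_compl_singleton_iff hy, hmem ht, true_and]
    · simp only [hN _ (hmem ht), ite_not]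
  · rw [if_neg]
    rw [allOnesOn_compl_singleton_iff hy]
    exact fun h => (mem_sdiff.1 ht).2 (mem_filter.2 ⟨(mem_sdiff.1 ht).1, h.1⟩)

/-- A pointwise envelope for the contribution of a block to correlations of
`blockWeight y N boolSign` with cylinder products. -/
noncomputable def signEnvelope (y : κ) (S : Finset κ) (N : (κ → Bool) → Prop) [DecidablePred N]
    (s : Finset T) (X : T → κ → Bool) : ℝ :=
  √(#(fullRows (insert y S)ᶜ s X)) * ∏ t ∈ s, if N (X t) then 1 else 0

lemma prod_mul_ite_fullRows_eq_signEnvelope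
    (hN : ∀ r, AllOnesOn (insert y S)ᶜ r → (N r ↔ ¬ AllOnesOn S r)) (s : Finset T)
    (X : T → κ → Bool) :
    (∏ t ∈ s \ fullRows (insert y S)ᶜ s X, if N (X t) then (1 : ℝ) else 0) *
        (√(#(fullRows (insert y S)ᶜ s X)) *
          if fullRows S (fullRows (insert y S)ᶜ s X) X = ∅ then 1 else 0) =
      signEnvelope y S N s X := by
  have hrow (t) (ht : t ∈ fullRows (insert y S)ᶜ s X) :
      (if AllOnesOn S (X t) then (0 : ℝ) else 1) = if N (X t) then 1 else 0 := by
    simp only [hN _ (mem_filter.1 ht).2, ite_not]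
  rw [signEnvelope, ← prod_sdiff (fullRows_subset (insert y S)ᶜ s X), ite_fullRows_eq_empty,
    prod_congr rfl hrow]
  ring

variable [Fintype T]

lemma abs_expect_blockWeight_le (hy : y ∉ S)
    (hN : ∀ r, AllOnesOn (insert y S)ᶜ r → (N r ↔ ¬ AllOnesOn S r)) {β : Type} {A : Finset β}
    {s : β → Finset T} {χ c : (T → κ → Bool) → ℝ} (hs : (A : Set β).PairwiseDisjoint s)
    (hχ : IsCylinderProduct (insert y S) χ) (hc : ∀ X, 0 ≤ c X)
    (hcA : DependsOn c ((A.biUnion s : Finset T) : Set T)ᶜ) :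
    |𝔼 X, c X * (∏ b ∈ A, blockWeight y N boolSign (s b) X) * χ X| ≤
      𝔼 X, c X * ∏ b ∈ A, signEnvelope y S N (s b) X := by
  let R := insert y S
  let s' (W : T → κ → Bool) (b : β) : Finset T := fullRows Rᶜ (s b) W
  have hs' (V W) (b : β) : fullRows Rᶜ (s b) (glueColumns R V W) = s' W b :=
    fullRows_congr fun t _ j hj => glueColumns_of_notMem (mem_compl.1 hj) V W t
  have hfull (V W) (b : β) : fullRows S (s' W b) (glueColumns R V W) = fullRows S (s' W b) V :=
    fullRows_congr fun t _ j hj => glueColumns_of_mem (mem_insert_of_mem hj) V W t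
  have hsign (V W) (b : β) : blockSign y S (s' W b) (glueColumns R V W) =
      blockSign y S (s' W b) V :=
    blockSign_congr (fun t _ j hj => glueColumns_of_mem (mem_insert_of_mem hj) V W t)
      fun t _ => glueColumns_of_mem (mem_insert_self y S) V W t
  let c' (W V : T → κ → Bool) : ℝ := c (glueColumns R V W) *
    ∏ b ∈ A, ∏ t ∈ s b \ s' W b, if N (glueColumns R V W t) then 1 else 0
  have hc'0 (W V) : 0 ≤ c' W V := mul_nonneg (hc _)
    (prod_nonneg fun b _ => prod_nonneg fun t _ => by split_ifs <;> norm_num)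
  have hc' (W) : DependsOn (c' W) ((A.biUnion (s' W) : Finset T) : Set T)ᶜ := fun V V' h =>
    dependsOn_mul_prod_sdiff hs (fun b => fullRows_subset _ (s b) W) hcA
      (fun r => if N r then 1 else 0) fun t ht => by rw [glueColumns, glueColumns, h t ht]
  have hleft (V W) : c (glueColumns R V W) *
      (∏ b ∈ A, blockWeight y N boolSign (s b) (glueColumns R V W)) =
        c' W V * ∏ b ∈ A, blockSign y S (s' W b) V := by
    simp only [blockWeight_boolSign hy hN, hs', hsign, prod_mul_distrib, c', mul_assoc, R]
  have hright (V W) : c (glueColumns R V W) *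
      (∏ b ∈ A, signEnvelope y S N (s b) (glueColumns R V W)) =
        c' W V * ∏ b ∈ A, (√(#(s' W b)) * if fullRows S (s' W b) V = ∅ then 1 else 0) := by
    simp only [← prod_mul_ite_fullRows_eq_signEnvelope hN, hs', hfull, prod_mul_distrib, c',
      mul_assoc, R]
  rw [← expect_glueColumns R, ← expect_glueColumns R fun X => c X * _]
  simp only [hleft, hright]
  exact (abs_expect_le _ _).trans <| expect_le_expect fun W _ =>
    (blockSignBound T hy).abs_expect_mul_le (hs.mono fun b => fullRows_subset _ (s b) W)
      (hχ.comp (isColumnwise_glueColumns R W)) (hc'0 W) (hc' W)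

end BlockWeight

section BlockMass

variable {T κ : Type*} {y : κ} {N : (κ → Bool) → Prop} [DecidablePred N] [Fintype κ]
  [DecidableEq κ]

/-- The proportion of the rows that satisfy `N`. -/
noncomputable def rowDensity (N : (κ → Bool) → Prop) [DecidablePred N] : ℝ :=
  𝔼 r, if N r then 1 else 0

/-- The average of `blockWeight y N f s` if the values of `f` sum to `1`. -/
noncomputable def blockMass (y : κ) (N : (κ → Bool) → Prop) [DecidablePred N] (s : Finset T) : ℝ :=
  #s * ((1 / 2) ^ #({y}ᶜ : Finset κ) / 2) * rowDensity N ^ (#s - 1)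

lemma rowDensity_nonneg (N : (κ → Bool) → Prop) [DecidablePred N] :
    0 ≤ rowDensity N :=
  expect_nonneg fun r _ => by split_ifs <;> norm_num

lemma blockMass_nonneg (y : κ) (N : (κ → Bool) → Prop) [DecidablePred N] (s : Finset T) :
    0 ≤ blockMass y N s := by
  have := rowDensity_nonneg N
  unfold blockMass
  positivity

lemma blockMass_pos {N : (κ → Bool) → Prop} [DecidablePred N] (hN : 0 < rowDensity N)
    {s : Finset T} (hs : s.Nonempty) : 0 < blockMass y N s := by
  have : (0 : ℝ) < #s := by exact_mod_cast hs.card_pos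
  unfold blockMass
  positivity

lemma expect_ite_allOnesOn_compl_singleton (y : κ) (f : Bool → ℝ) :
    𝔼 r, (if AllOnesOn {y}ᶜ r then f (r y) else 0) =
      (1 / 2) ^ #({y}ᶜ : Finset κ) / 2 * (f true + f false) := by
  have h (r : κ → Bool) : (if AllOnesOn {y}ᶜ r then f (r y) else 0) =
      f (r y) * if AllOnesOn {y}ᶜ r then 1 else 0 := (mul_boole _ _).symm
  simp only [h]
  rw [expect_mul_of_dependsOn (s := {y}), expect_eval, expect_bool, expect_allOnesOn]
  · ring
  · exact fun r r' h => congrArg f (h y (by simp))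
  · intro r r' h
    have : AllOnesOn {y}ᶜ r ↔ AllOnesOn {y}ᶜ r' :=
      forall₂_congr fun j hj => by rw [h j (by simpa using hj)]
    simp only [this]

lemma dependsOn_signEnvelope (y : κ) (S : Finset κ) (N : (κ → Bool) → Prop) [DecidablePred N]
    (s : Finset T) : DependsOn (signEnvelope y S N s) s := fun X X' h => by
  rw [signEnvelope, signEnvelope, dependsOn_fullRows _ s h,
    prod_congr rfl fun t ht => by rw [h t ht]]

variable [DecidableEq T]

lemma blockWeight_nonneg {f : Bool → ℝ} (hf : ∀ b, 0 ≤ f b) (s : Finset T) (X : T → κ → Bool) :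
    0 ≤ blockWeight y N f s X :=
  sum_nonneg fun i _ => mul_nonneg (by dsimp only; split_ifs <;> simp [hf])
    (prod_nonneg fun t _ => by dsimp only; split_ifs <;> norm_num)

lemma dependsOn_blockWeight (y : κ) (N : (κ → Bool) → Prop) [DecidablePred N] (f : Bool → ℝ)
    (s : Finset T) : DependsOn (blockWeight y N f s) s :=
  fun _ _ h => markedSum_congr (fun t ht => by rw [h t ht]) fun t ht => by rw [h t ht]

variable [Fintype T]

lemma expect_blockWeight (y : κ) (N : (κ → Bool) → Prop) [DecidablePred N] (f : Bool → ℝ)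
    (s : Finset T) :
    𝔼 X, blockWeight y N f s X = (f true + f false) * blockMass y N s := by
  simp only [blockWeight, expect_markedSum, expect_ite_allOnesOn_compl_singleton]
  rw [blockMass, rowDensity]
  ring

lemma expect_card_fullRows_mul_le (S : Finset κ) (s : Finset T) :
    𝔼 X : T → κ → Bool, (#(fullRows S s X) * ∏ t ∈ s, if N (X t) then (1 : ℝ) else 0) ≤
      #s * (1 / 2) ^ #S * rowDensity N ^ (#s - 1) := by
  rw [rowDensity, ← expect_allOnesOn, ← expect_markedSum]
  refine expect_le_expect fun X _ => ?_
  rw [fullRows, ← sum_boole, sum_mul]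
  refine sum_le_sum fun t ht => mul_le_mul_of_nonneg_left ?_ (by split_ifs <;> norm_num)
  rw [← mul_prod_erase s _ ht]
  exact mul_le_of_le_one_left (prod_nonneg fun t _ => by split_ifs <;> norm_num)
    (by split_ifs <;> norm_num)

lemma sq_expect_signEnvelope_le (S : Finset κ) (s : Finset T) :
    (𝔼 X, signEnvelope y S N s X) ^ 2 ≤
      rowDensity N ^ #s * (#s * (1 / 2) ^ #((insert y S)ᶜ) *
        rowDensity N ^ (#s - 1)) := by
  have hN (X : T → κ → Bool) : 0 ≤ ∏ t ∈ s, if N (X t) then (1 : ℝ) else 0 :=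
    prod_nonneg fun t _ => by split_ifs <;> norm_num
  refine (sq_expect_le_of_sq_le_mul hN (g := fun X => #(fullRows (insert y S)ᶜ s X) *
    ∏ t ∈ s, if N (X t) then (1 : ℝ) else 0) (fun X => mul_nonneg (Nat.cast_nonneg _) (hN X))
    fun X => ?_).trans ?_
  · rw [signEnvelope, mul_pow, Real.sq_sqrt (Nat.cast_nonneg _)]
    exact le_of_eq (by ring)
  · rw [expect_prod_eval s fun _ r => if N r then (1 : ℝ) else 0, prod_const]
    exact mul_le_mul_of_nonneg_left (expect_card_fullRows_mul_le _ s)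
      (pow_nonneg (rowDensity_nonneg N) _)

lemma expect_signEnvelope_le {S : Finset κ} (hy : y ∉ S) {B : ℝ} (hSB : 2 ^ #S ≤ B)
    (hNB : rowDensity N ≤ B * (1 / 2) ^ #({y}ᶜ : Finset κ)) {s : Finset T}
    (hs : s.Nonempty) :
    𝔼 X, signEnvelope y S N s X ≤ 2 * B / √(#s) * blockMass y N s := by
  have hr : (0 : ℝ) < #s := by exact_mod_cast hs.card_pos
  have hν := rowDensity_nonneg N
  have hB : 0 ≤ B := le_trans (by positivity) hSB
  have hcard : ((1 : ℝ) / 2) ^ #((insert y S)ᶜ) = 2 ^ #S * (1 / 2) ^ #({y}ᶜ : Finset κ) := by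
    have : #((insert y S)ᶜ) + #S = #({y}ᶜ : Finset κ) := by
      have := card_le_univ (insert y S)
      have := card_insert_of_notMem hy
      have := card_compl (insert y S)
      have := card_compl {y}
      have := card_singleton y
      omega
    rw [← this, pow_add, mul_left_comm, ← mul_pow]
    norm_num
  have hrow : 2 ^ #S * rowDensity N ≤ B * (B * (1 / 2) ^ #({y}ᶜ : Finset κ)) := by gcongr
  refine abs_le_of_sq_le_sq' ((sq_expect_signEnvelope_le S s).trans ?_) ?_ |>.2
  · calc rowDensity N ^ #s * (#s * (1 / 2) ^ #((insert y S)ᶜ) * rowDensity N ^ (#s - 1))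
        = #s * (1 / 2) ^ #({y}ᶜ : Finset κ) * (rowDensity N ^ (#s - 1)) ^ 2 *
            (2 ^ #S * rowDensity N) := by
          rw [hcard, ← Nat.sub_add_cancel hs.card_pos, Nat.add_sub_cancel]
          ring
      _ ≤ #s * (1 / 2) ^ #({y}ᶜ : Finset κ) * (rowDensity N ^ (#s - 1)) ^ 2 *
            (B * (B * (1 / 2) ^ #({y}ᶜ : Finset κ))) := by gcongr
      _ = (2 * B / √(#s) * blockMass y N s) ^ 2 := by
          rw [blockMass, mul_pow, div_pow (2 * B), Real.sq_sqrt hr.le]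
          field_simp
  · have := blockMass_nonneg y N s
    positivity

end BlockMass

/-- The probability of `b` under the Bernoulli distribution with parameter `ρ`. -/
def bernoulliWeight (ρ : ℝ) (b : Bool) : ℝ := if b then ρ else 1 - ρ

lemma bernoulliWeight_nonneg {ρ : ℝ} (h : ρ ∈ Set.Icc 0 1) (b : Bool) :
    0 ≤ bernoulliWeight ρ b := by
  cases b <;> simp [bernoulliWeight, h.1, h.2]

lemma bernoulliWeight_true_add_false (ρ : ℝ) :
    bernoulliWeight ρ true + bernoulliWeight ρ false = 1 := by
  simp [bernoulliWeight]

section BlockCorrelation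

variable {T κ : Type*} {β : Type} [DecidableEq T] [Fintype κ] [DecidableEq κ] {y : κ}
  {N : (κ → Bool) → Prop} [DecidablePred N]

lemma blockWeight_bernoulliWeight (y : κ) (N : (κ → Bool) → Prop) [DecidablePred N] (ρ ρ' : ℝ)
    (s : Finset T) (X : T → κ → Bool) :
    blockWeight y N (bernoulliWeight ρ) s X = (ρ' - ρ) * blockWeight y N boolSign s X +
      blockWeight y N (bernoulliWeight ρ') s X := by
  simp only [blockWeight, markedSum, mul_sum, ← sum_add_distrib]
  refine sum_congr rfl fun i _ => ?_
  rw [← mul_assoc, ← add_mul]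
  congr 1
  cases X i y <;> split_ifs <;> simp [bernoulliWeight, boolSign]

variable [Fintype T]

lemma expect_prod_blockWeight {B : Finset β} {s : β → Finset T}
    (hs : (B : Set β).PairwiseDisjoint s) (ρ : β → ℝ) :
    𝔼 X, ∏ b ∈ B, blockWeight y N (bernoulliWeight (ρ b)) (s b) X =
      ∏ b ∈ B, blockMass y N (s b) := by
  rw [expect_prod_of_dependsOn hs fun b _ => dependsOn_blockWeight y N _ (s b)]
  simp only [expect_blockWeight, bernoulliWeight_true_add_false, one_mul]

variable [DecidableEq β]

/-- The correlation of `P` with the signs of the marked rows in the blocks of `A`, if those in the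
other blocks of `B` have a zero in column `y`. -/
noncomputable def blockCorrelation (y : κ) (N : (κ → Bool) → Prop) [DecidablePred N]
    (B : Finset β) (s : β → Finset T) (P : (T → κ → Bool) → ℝ) (A : Finset β) : ℝ :=
  𝔼 X, P X * ((∏ b ∈ A, blockWeight y N boolSign (s b) X) *
    ∏ b ∈ B \ A, blockWeight y N (bernoulliWeight 0) (s b) X)

lemma sum_powerset_blockCorrelation (B : Finset β) (s : β → Finset T)
    (P : (T → κ → Bool) → ℝ) (ρ : ℝ) :
    ∑ A ∈ B.powerset, (-ρ) ^ #A * blockCorrelation y N B s P A =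
      𝔼 X, P X * ∏ b ∈ B, blockWeight y N (bernoulliWeight ρ) (s b) X := by
  simp only [blockWeight_bernoulliWeight y N ρ 0, zero_sub, prod_add, prod_mul_distrib, prod_const,
    blockCorrelation, mul_expect, mul_sum, expect_sum_comm]
  exact sum_congr rfl fun A _ => expect_congr rfl fun X _ => by ring

lemma blockCorrelation_singleton {B : Finset β} {b : β} (hb : b ∈ B) (s : β → Finset T)
    (P : (T → κ → Bool) → ℝ) :
    blockCorrelation y N B s P {b} =
      (𝔼 X, P X * ∏ d ∈ B, blockWeight y N (bernoulliWeight 0) (s d) X) -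
        𝔼 X, P X * ∏ d ∈ B,
          blockWeight y N (bernoulliWeight (Pi.single (M := fun _ => ℝ) b 1 d)) (s d) X := by
  rw [blockCorrelation, ← expect_sub_distrib]
  refine expect_congr rfl fun X _ => ?_
  have hrest : ∏ d ∈ B.erase b,
      blockWeight y N (bernoulliWeight (Pi.single (M := fun _ => ℝ) b 1 d)) (s d) X =
        ∏ d ∈ B.erase b, blockWeight y N (bernoulliWeight 0) (s d) X :=
    prod_congr rfl fun d hd => by rw [Pi.single_eq_of_ne (ne_of_mem_erase hd)]
  rw [← mul_prod_erase B _ hb, ← mul_prod_erase B _ hb, hrest, Pi.single_eq_same,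
    sdiff_singleton_eq_erase, prod_singleton, blockWeight_bernoulliWeight y N 0 1]
  ring

lemma abs_blockCorrelation_le {S : Finset κ} (hy : y ∉ S)
    (hN : ∀ r, AllOnesOn (insert y S)ᶜ r → (N r ↔ ¬ AllOnesOn S r)) {K D : ℝ}
    (hSK : 2 ^ #S ≤ K) (hNK : rowDensity N ≤ K * (1 / 2) ^ #({y}ᶜ : Finset κ))
    {B A : Finset β} (hA : A ⊆ B) {s : β → Finset T} (hs : (B : Set β).PairwiseDisjoint s)
    (hs0 : ∀ b ∈ B, (s b).Nonempty) (hD : ∀ b ∈ B, 2 * K / √(#(s b)) ≤ D)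
    {χ : (T → κ → Bool) → ℝ} (hχ : IsCylinderProduct (insert y S) χ) :
    |blockCorrelation y N B s χ A| ≤ D ^ #A * ∏ b ∈ B, blockMass y N (s b) := by
  let c (X : T → κ → Bool) : ℝ := ∏ b ∈ B \ A, blockWeight y N (bernoulliWeight 0) (s b) X
  have hc (X) : 0 ≤ c X :=
    prod_nonneg fun b _ => blockWeight_nonneg (bernoulliWeight_nonneg (by simp)) _ _
  have hcdep : DependsOn c ((A.biUnion s : Finset T) : Set T)ᶜ := by
    refine dependsOn_prod fun b hb => (dependsOn_blockWeight y N _ (s b)).mono fun t ht hmem => ?_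
    obtain ⟨d, hd, htd⟩ := mem_biUnion.1 (mem_coe.1 hmem)
    obtain rfl := hs.elim_finset (mem_sdiff.1 hb).1 (hA hd) t ht htd
    exact (mem_sdiff.1 hb).2 hd
  have hcE : 𝔼 X, c X = ∏ b ∈ B \ A, blockMass y N (s b) :=
    expect_prod_blockWeight (hs.subset (coe_subset.2 sdiff_subset)) fun _ => 0
  have henv : DependsOn (fun X => ∏ b ∈ A, signEnvelope y S N (s b) X)
      (A.biUnion s : Finset T) :=
    dependsOn_prod fun b hb => (dependsOn_signEnvelope y S N (s b)).mono <|
      coe_subset.2 (subset_biUnion_of_mem s hb)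
  have hsA : (A : Set β).PairwiseDisjoint s := hs.subset (coe_subset.2 hA)
  calc |blockCorrelation y N B s χ A|
      = |𝔼 X, c X * (∏ b ∈ A, blockWeight y N boolSign (s b) X) * χ X| := by
        rw [blockCorrelation]
        congr 1
        exact expect_congr rfl fun X _ => by ring
    _ ≤ 𝔼 X, c X * ∏ b ∈ A, signEnvelope y S N (s b) X :=
        abs_expect_blockWeight_le hy hN hsA hχ hc hcdep
    _ = (∏ b ∈ A, 𝔼 X, signEnvelope y S N (s b) X) * ∏ b ∈ B \ A, blockMass y N (s b) := by
        rw [← expect_prod_of_dependsOn hsA fun b _ => dependsOn_signEnvelope y S N (s b), ← hcE,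
          ← expect_mul_of_dependsOn henv hcdep]
        simp only [mul_comm]
    _ ≤ (∏ b ∈ A, D * blockMass y N (s b)) * ∏ b ∈ B \ A, blockMass y N (s b) := by
        refine mul_le_mul_of_nonneg_right (prod_le_prod (fun b _ => ?_) fun b hb => ?_)
          (prod_nonneg fun b _ => blockMass_nonneg y N _)
        · exact expect_nonneg fun X _ => mul_nonneg (Real.sqrt_nonneg _)
            (prod_nonneg fun t _ => by split_ifs <;> norm_num)
        · exact (expect_signEnvelope_le hy hSK hNK (hs0 b (hA hb))).trans <|
            mul_le_mul_of_nonneg_right (hD b (hA hb)) (blockMass_nonneg y N _)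
    _ = D ^ #A * ∏ b ∈ B, blockMass y N (s b) := by
        rw [prod_mul_distrib, prod_const, mul_assoc, mul_comm (∏ b ∈ A, _), prod_sdiff hA]

lemma abs_blockCorrelation_sum_le {ι : Type*} {J : Finset ι} (a : ι → ℝ)
    {χ : ι → (T → κ → Bool) → ℝ} {B : Finset β} {s : β → Finset T} {A : Finset β} {ε : ℝ}
    (h : ∀ j ∈ J, |blockCorrelation y N B s (χ j) A| ≤ ε) :
    |blockCorrelation y N B s (fun X => ∑ j ∈ J, a j * χ j X) A| ≤ (∑ j ∈ J, |a j|) * ε := by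
  have hsum : blockCorrelation y N B s (fun X => ∑ j ∈ J, a j * χ j X) A =
      ∑ j ∈ J, a j * blockCorrelation y N B s (χ j) A := by
    simp only [blockCorrelation, sum_mul, expect_sum_comm, mul_expect, mul_assoc]
  rw [hsum, sum_mul]
  refine (abs_sum_le_sum_abs _ _).trans (sum_le_sum fun j hj => ?_)
  rw [abs_mul]
  exact mul_le_mul_of_nonneg_left (h j hj) (abs_nonneg _)

end BlockCorrelation

section Markov

open Polynomial

lemma abs_eval_derivative_one_le {P : ℝ[X]} {c : ℕ} {L : ℝ} (hdeg : P.natDegree ≤ c)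
    (hL : 0 < L) (hP : ∀ x ∈ Set.Icc (-1) 1, |P.eval x| ≤ L) :
    |(derivative P).eval 1| ≤ c ^ 2 * L := by
  have hbound {Q : ℝ[X]} (hdeg : Q.natDegree ≤ c) (hQ : ∀ x ∈ Set.Icc (-1) 1, |Q.eval x| ≤ L) :
      (derivative Q).eval 1 ≤ c ^ 2 * L := by
    have h := Chebyshev.eval_iterate_derivative_le_of_forall_abs_le_one (n := c)
      (P := C L⁻¹ * Q) (k := 1) le_rfl
      (natDegree_le_iff_degree_le.1 ((natDegree_C_mul_le _ _).trans hdeg))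
      fun x hx => by
        rw [eval_C_mul, abs_mul, abs_of_pos (inv_pos.2 hL)]
        exact inv_mul_le_one_of_le₀ (hQ x hx) hL.le
    rw [iterate_one, derivative_C_mul, eval_C_mul, Chebyshev.derivative_T_eval_one,
      inv_mul_le_iff₀ hL] at h
    exact_mod_cast h.trans_eq (mul_comm _ _)
  refine abs_le.2 ⟨neg_le.1 ?_, hbound hdeg hP⟩
  have := hbound (Q := -P) (by rwa [natDegree_neg]) fun x hx => by
    rw [eval_neg, abs_neg]; exact hP x hx
  rwa [derivative_neg, eval_neg] at this

lemma abs_coeff_one_le {P : ℝ[X]} {c : ℕ} {L : ℝ} (hdeg : P.natDegree ≤ c) (hL : 0 < L)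
    (hP : ∀ x ∈ Set.Icc 0 1, |P.eval x| ≤ L) : |P.coeff 1| ≤ 2 * c ^ 2 * L := by
  let ℓ : ℝ[X] := C (1 / 2) - C (1 / 2) * X
  have hℓ : ℓ.natDegree ≤ 1 := by
    dsimp only [ℓ]
    compute_degree
  have h := abs_eval_derivative_one_le (P := P.comp ℓ)
    (natDegree_comp_le.trans <| (Nat.mul_le_mul hdeg hℓ).trans_eq (mul_one c)) hL fun x hx => by
      rw [eval_comp]
      refine hP _ ?_
      simp only [ℓ, eval_sub, eval_mul, eval_C, eval_X]
      constructor <;> linarith [hx.1, hx.2]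
  have hderiv : (derivative (P.comp ℓ)).eval 1 = -(P.coeff 1 / 2) := by
    have hcoeff : P.coeff 1 = (derivative P).eval 0 := by
      rw [← coeff_zero_eq_eval_zero, coeff_derivative]
      simp
    rw [derivative_comp, eval_mul, eval_comp, hcoeff]
    simp only [ℓ, derivative_sub, derivative_mul, derivative_C, derivative_X, eval_sub, eval_mul,
      eval_C, eval_X, eval_zero, eval_add, eval_one]
    ring_nf
  rw [hderiv, abs_neg, abs_div, abs_two] at h
  linarith

end Markov

section PowersetPolynomial

variable {β : Type*}

lemma sum_powerset_filter_lt_card_le {B : Finset β} {c : ℕ} {D : ℝ} (hc : 0 < c) (hD : 0 ≤ D)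
    (hDB : 100 * (D * #B) ≤ c) :
    ∑ A ∈ B.powerset with c < #A, 2 ^ c * D ^ #A ≤ 1 / 10 := by
  calc ∑ A ∈ B.powerset with c < #A, 2 ^ c * D ^ #A
      ≤ ∑ A ∈ B.powerset with c < #A, (1 / 50) ^ c * (100 * D) ^ #A := by
        refine sum_le_sum fun A hA => ?_
        have h100 : (100 : ℝ) ^ c ≤ 100 ^ #A :=
          pow_le_pow_right₀ (by norm_num) (mem_filter.1 hA).2.le
        calc (2 : ℝ) ^ c * D ^ #A = (1 / 50) ^ c * 100 ^ c * D ^ #A := by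
              rw [← mul_pow]; norm_num
          _ ≤ (1 / 50) ^ c * 100 ^ #A * D ^ #A := by gcongr
          _ = (1 / 50) ^ c * (100 * D) ^ #A := by rw [mul_pow, mul_assoc]
    _ ≤ ∑ A ∈ B.powerset, (1 / 50) ^ c * (100 * D) ^ #A :=
        sum_le_sum_of_subset_of_nonneg (filter_subset _ _) fun A _ _ => by positivity
    _ = (1 / 50) ^ c * (100 * D + 1) ^ #B := by
        rw [← mul_sum, ← sum_pow_mul_eq_add_pow]
        simp only [one_pow, mul_one]
    _ ≤ (1 / 50) ^ c * Real.exp 1 ^ c := by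
        gcongr
        calc (100 * D + 1) ^ #B ≤ Real.exp (100 * D) ^ #B := by
              gcongr
              exact Real.add_one_le_exp _
          _ = Real.exp (100 * (D * #B)) := by rw [← Real.exp_nat_mul]; congr 1; ring
          _ ≤ Real.exp c := Real.exp_le_exp.2 hDB
          _ = Real.exp 1 ^ c := by rw [← Real.exp_nat_mul, mul_one]
    _ ≤ (1 / 10) ^ c := by
        rw [← mul_pow]
        gcongr
        linarith [Real.exp_one_lt_three]
    _ ≤ 1 / 10 := pow_le_of_le_one (by norm_num) (by norm_num) hc.ne'

lemma coeff_one_sum_powerset (B : Finset β) {c : ℕ} (hc : 0 < c) (g : Finset β → ℝ) :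
    (∑ A ∈ B.powerset with #A ≤ c, .C (g A) * .X ^ #A : Polynomial ℝ).coeff 1 =
      ∑ b ∈ B, g {b} := by
  have hfilter : {A ∈ B.powerset | #A ≤ c ∧ 1 = #A} = B.powersetCard 1 := by
    ext A
    simp only [mem_filter, mem_powerset, mem_powersetCard]
    exact and_congr_right fun _ => ⟨fun h => h.2.symm, fun h => ⟨h.trans_le hc, h.symm⟩⟩
  simp only [Polynomial.finsetSum_coeff, Polynomial.coeff_C_mul, Polynomial.coeff_X_pow,
    mul_ite, mul_one, mul_zero, ← sum_filter, filter_filter]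
  rw [hfilter, powersetCard_one, sum_map]
  rfl

lemma card_lt_of_abs_sum_powerset_le_one {B : Finset β} {c : ℕ} {D : ℝ} {h : Finset β → ℝ}
    (hc : 0 < c) (hD : 0 ≤ D) (hDB : 100 * (D * #B) ≤ c)
    (hbound : ∀ ρ ∈ Set.Icc 0 1, |∑ A ∈ B.powerset, (-ρ) ^ #A * h A| ≤ 1)
    (hh : ∀ A ⊆ B, |h A| ≤ 2 ^ c * D ^ #A) (hsingle : ∀ b ∈ B, 1 / 2 ≤ h {b}) :
    #B < 5 * c ^ 2 := by
  let P : Polynomial ℝ := ∑ A ∈ B.powerset with #A ≤ c, .C ((-1) ^ #A * h A) * .X ^ #A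
  have hdeg : P.natDegree ≤ c := Polynomial.natDegree_sum_le_of_forall_le _ _ fun A hA =>
    (Polynomial.natDegree_C_mul_X_pow_le _ _).trans (mem_filter.1 hA).2
  have hP (ρ : ℝ) (hρ : ρ ∈ Set.Icc 0 1) : |P.eval ρ| ≤ 1 + 1 / 10 := by
    have htail : |∑ A ∈ B.powerset with ¬ #A ≤ c, (-ρ) ^ #A * h A| ≤ 1 / 10 := by
      simp only [not_le]
      refine (abs_sum_le_sum_abs _ _).trans <| (sum_le_sum fun A hA => ?_).trans
        (sum_powerset_filter_lt_card_le hc hD hDB)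
      rw [abs_mul, abs_pow, abs_neg, abs_of_nonneg hρ.1]
      exact (mul_le_of_le_one_left (abs_nonneg _) (pow_le_one₀ hρ.1 hρ.2)).trans
        (hh A (mem_powerset.1 (mem_filter.1 hA).1))
    have heval : P.eval ρ = (∑ A ∈ B.powerset, (-ρ) ^ #A * h A) -
        ∑ A ∈ B.powerset with ¬ #A ≤ c, (-ρ) ^ #A * h A := by
      rw [← sum_filter_add_sum_filter_not B.powerset (fun A => #A ≤ c), add_sub_cancel_right]
      simp only [P, Polynomial.eval_finsetSum, Polynomial.eval_C_mul, Polynomial.eval_X_pow]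
      exact sum_congr rfl fun A _ => by rw [neg_pow ρ]; ring
    rw [heval]
    exact (abs_sub _ _).trans (add_le_add (hbound ρ hρ) htail)
  have hcoeff : P.coeff 1 = -∑ b ∈ B, h {b} := by
    rw [coeff_one_sum_powerset B hc, ← sum_neg_distrib]
    simp only [card_singleton, pow_one, neg_one_mul]
  have hlower : #B / 2 ≤ ∑ b ∈ B, h {b} := by
    have := card_nsmul_le_sum B _ _ hsingle
    rw [nsmul_eq_mul] at this
    linarith
  have hmarkov := abs_coeff_one_le hdeg (by norm_num) hP
  rw [hcoeff, abs_neg] at hmarkov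
  have := le_abs_self (∑ b ∈ B, h {b})
  have hc2 : (0 : ℝ) < c ^ 2 := by positivity
  exact_mod_cast (by linarith : (#B : ℝ) < 5 * c ^ 2)

end PowersetPolynomial

lemma abs_expect_mul_sub_le {α : Type*} [Fintype α] {P w : α → ℝ} {a ε : ℝ} (hw : ∀ x, 0 ≤ w x)
    (h : ∀ x, w x ≠ 0 → |P x - a| ≤ ε) :
    |(𝔼 x, P x * w x) - a * 𝔼 x, w x| ≤ ε * 𝔼 x, w x := by
  rw [mul_expect, mul_expect, ← expect_sub_distrib]
  refine (abs_expect_le _ _).trans (expect_le_expect fun x _ => ?_)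
  rw [← sub_mul, abs_mul, abs_of_nonneg (hw x)]
  by_cases hx : w x = 0
  · simp [hx]
  · exact mul_le_mul_of_nonneg_right (h x hx) (hw x)

section NearlyFull

variable {κ : Type*} [Fintype κ] [DecidableEq κ] {c : ℕ} {y : κ}

/-- The row `r` has at least one and at most `c` zeros outside column `y`. -/
def NearlyFull (c : ℕ) (y : κ) (r : κ → Bool) : Prop :=
  #{j ∈ {y}ᶜ | r j = false} ∈ Set.Icc 1 c

instance (c : ℕ) (y : κ) : DecidablePred (NearlyFull c y) :=
  fun _ => inferInstanceAs (Decidable (_ ∧ _))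

/-- The number of subsets of `κ` with at most `c` elements. -/
def smallSubsetCount (κ : Type*) [Fintype κ] [DecidableEq κ] (c : ℕ) : ℕ :=
  #{Z : Finset κ | #Z ≤ c}

lemma smallSubsetCount_eq_sum_choose (κ : Type*) [Fintype κ] [DecidableEq κ] (c : ℕ) :
    smallSubsetCount κ c =
      ∑ i ∈ range (min c (Fintype.card κ) + 1), (Fintype.card κ).choose i := by
  rw [smallSubsetCount, card_eq_sum_card_fiberwise (f := card)
    (t := range (min c (Fintype.card κ) + 1))]
  · refine sum_congr rfl fun i hi => ?_
    rw [← card_univ, ← card_powersetCard]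
    congr 1
    ext Z
    simp only [mem_filter, mem_powersetCard, mem_univ, subset_univ, true_and, and_iff_right_iff_imp]
    rintro rfl
    exact (Nat.lt_succ_iff.1 (mem_range.1 hi)).trans (min_le_left _ _)
  · intro Z hZ
    exact mem_coe.2 <| mem_range.2 <| Nat.lt_succ_iff.2 <|
      le_min (mem_filter.1 hZ).2 (card_le_univ Z)

lemma two_pow_card_le_smallSubsetCount {S : Finset κ} (hS : #S ≤ c) :
    2 ^ #S ≤ smallSubsetCount κ c := by
  rw [← card_powerset]
  exact card_le_card fun Z hZ =>
    mem_filter.2 ⟨mem_univ Z, (card_le_card (mem_powerset.1 hZ)).trans hS⟩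

lemma card_filter_nearlyFull_le (c : ℕ) (y : κ) :
    #{r | NearlyFull c y r} ≤ 2 * smallSubsetCount κ c := by
  rw [smallSubsetCount, ← Fintype.card_bool, ← card_univ, ← card_product]
  refine card_le_card_of_injOn (fun r => (r y, ({j ∈ {y}ᶜ | r j = false} : Finset κ)))
    (fun r hr => ?_) fun r _ r' _ h => ?_
  · exact mem_product.2 ⟨mem_univ _, mem_filter.2 ⟨mem_univ _, (mem_filter.1 hr).2.2⟩⟩
  · obtain ⟨hy, hzeros⟩ := Prod.mk.inj h
    ext1 j
    by_cases hj : j = y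
    · exact hj ▸ hy
    · have := Finset.ext_iff.1 hzeros j
      simp only [mem_filter, mem_compl, mem_singleton, hj, not_false_eq_true, true_and] at this
      cases h : r j <;> cases h' : r' j <;> simp_all

lemma rowDensity_nearlyFull_le (c : ℕ) (y : κ) :
    rowDensity (NearlyFull c y) ≤ smallSubsetCount κ c * (1 / 2) ^ #({y}ᶜ : Finset κ) := by
  have hcard : Fintype.card κ = #({y}ᶜ : Finset κ) + 1 := by
    rw [← card_add_card_compl {y}, card_singleton, add_comm]
  rw [rowDensity, Fintype.expect_eq_sum_div_card, sum_boole, Fintype.card_fun, Fintype.card_bool,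
    hcard, pow_succ', one_div, inv_pow, ← div_eq_mul_inv, Nat.cast_mul, Nat.cast_pow,
    Nat.cast_ofNat, ← div_div]
  gcongr
  rw [div_le_iff₀ two_pos, mul_comm]
  exact_mod_cast card_filter_nearlyFull_le c y

lemma NearlyFull.not_allOnesOn {r : κ → Bool} (hr : NearlyFull c y r) : ¬ AllOnesOn {y}ᶜ r := by
  obtain ⟨j, hj⟩ := card_pos.1 hr.1
  intro h
  simp_all [h j (mem_filter.1 hj).1]

lemma nearlyFull_iff {S : Finset κ} (hy : y ∉ S) (hS : #S ≤ c) (r : κ → Bool)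
    (hr : AllOnesOn (insert y S)ᶜ r) : NearlyFull c y r ↔ ¬ AllOnesOn S r := by
  refine ⟨fun h hSr => h.not_allOnesOn ((allOnesOn_compl_singleton_iff hy r).2 ⟨hr, hSr⟩),
    fun h => ⟨card_pos.2 ?_, (card_le_card fun j hj => ?_).trans hS⟩⟩
  · simp only [AllOnesOn, not_forall, Bool.not_eq_true] at h
    obtain ⟨j, hj, hrj⟩ := h
    exact ⟨j, by simp [hrj, ne_of_mem_of_not_mem hj hy]⟩
  · by_contra hjS
    have := hr j
    simp_all

lemma rowDensity_nearlyFull_pos [Nontrivial κ] (hc : 0 < c) (y : κ) :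
    0 < rowDensity (NearlyFull c y) := by
  obtain ⟨j, hj⟩ := exists_ne y
  have hnear : NearlyFull c y (update (fun _ => true) j false) := by
    have : ({i ∈ {y}ᶜ | update (fun _ => true) j false i = false} : Finset κ) = {j} := by
      ext i
      by_cases hi : i = j <;> simp [hi, hj]
    rw [NearlyFull, this]
    exact ⟨le_rfl, hc⟩
  exact expect_pos' (fun r _ => by split_ifs <;> norm_num)
    ⟨_, mem_univ _, by rw [if_pos hnear]; exact one_pos⟩

end NearlyFull

section Support

variable {T κ : Type*} [DecidableEq T]

lemma card_fullRows_biUnion {β : Type*} {S : Finset κ} {B : Finset β} {s : β → Finset T}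
    (hs : (B : Set β).PairwiseDisjoint s) (X : T → κ → Bool) :
    #(fullRows S (B.biUnion s) X) = ∑ b ∈ B, #(fullRows S (s b) X) := by
  rw [fullRows, filter_biUnion, card_biUnion]
  · rfl
  · exact fun b hb d hd hbd => disjoint_filter_filter (hs hb hd hbd)

variable [Fintype κ] [DecidableEq κ] {y : κ}
  {N : (κ → Bool) → Prop} [DecidablePred N]

lemma exists_of_blockWeight_ne_zero {f : Bool → ℝ} {s : Finset T} {X : T → κ → Bool}
    (h : blockWeight y N f s X ≠ 0) :
    ∃ i ∈ s, AllOnesOn {y}ᶜ (X i) ∧ f (X i y) ≠ 0 ∧ ∀ t ∈ s.erase i, N (X t) := by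
  obtain ⟨i, hi, hne⟩ := exists_ne_zero_of_sum_ne_zero h
  obtain ⟨hmarked, hrest⟩ := mul_ne_zero_iff.1 hne
  obtain ⟨hfull, hf⟩ := ite_ne_right_iff.1 hmarked
  exact ⟨i, hi, hfull, hf, fun t ht => (ite_ne_right_iff.1 (prod_ne_zero_iff.1 hrest t ht)).1⟩

lemma card_fullRows_univ_of_blockWeight_ne_zero (hN : ∀ r, N r → ¬ AllOnesOn {y}ᶜ r) {ρ : ℝ}
    (hρ : ρ = 0 ∨ ρ = 1) {s : Finset T} {X : T → κ → Bool}
    (h : blockWeight y N (bernoulliWeight ρ) s X ≠ 0) : #(fullRows univ s X) = ρ := by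
  obtain ⟨i, hi, hfull, hne, hrest⟩ := exists_of_blockWeight_ne_zero h
  have hrow : fullRows univ s X = if X i y then {i} else ∅ := by
    ext t
    by_cases hti : t = i
    · have hrow : AllOnesOn univ (X i) ↔ X i y = true :=
        ⟨fun h => h y (mem_univ y), fun h j _ =>
          (eq_or_ne j y).elim (fun hj => hj ▸ h) fun hj => hfull j (by simpa using hj)⟩
      subst hti
      by_cases hXy : X t y <;> simp [fullRows, hi, hrow, hXy]
    · have hrow (ht : t ∈ s) : ¬ AllOnesOn univ (X t) := fun h =>
        hN _ (hrest t (mem_erase.2 ⟨hti, ht⟩)) fun j _ => h j (mem_univ j)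
      split_ifs <;> simpa [fullRows, hti] using hrow
  rcases hρ with rfl | rfl <;> cases hXy : X i y <;> simp_all [bernoulliWeight]

end Support

section Assembly

variable {T κ : Type*}

lemma exists_pairwiseDisjoint_card_eq [Fintype T] {M r : ℕ} (h : M * r ≤ Fintype.card T) :
    ∃ s : Fin M → Finset T, ((univ : Finset (Fin M)) : Set (Fin M)).PairwiseDisjoint s ∧
      ∀ b, #(s b) = r := by
  obtain ⟨e⟩ : Nonempty (Fin M × Fin r ↪ T) := Embedding.nonempty_of_card_le (by simpa using h)
  refine ⟨fun b => univ.map ((Embedding.sectR b (Fin r)).trans e), fun b _ d _ hbd => ?_,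
    fun b => by simp⟩
  refine disjoint_left.2 fun t hb hd => ?_
  obtain ⟨i, -, rfl⟩ := mem_map.1 hb
  obtain ⟨j, -, hj⟩ := mem_map.1 hd
  exact hbd (congrArg Prod.fst (e.injective hj)).symm

variable [DecidableEq T] [Fintype κ] [DecidableEq κ]

section Blocks

variable {β : Type} {B : Finset β} {s : β → Finset T}

section Weights

variable [Fintype T] {y : κ} {N : (κ → Bool) → Prop} [DecidablePred N] {P : (T → κ → Bool) → ℝ}

lemma abs_expect_mul_prod_blockWeight_sub_le (hs : (B : Set β).PairwiseDisjoint s)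
    (hN : ∀ r, N r → ¬ AllOnesOn {y}ᶜ r) {ρ : β → ℝ} (hρ : ∀ b, ρ b = 0 ∨ ρ b = 1) {a ε : ℝ}
    (hP : ∀ X, #(fullRows univ (B.biUnion s) X) = ∑ b ∈ B, ρ b → |P X - a| ≤ ε) :
    |(𝔼 X, P X * ∏ b ∈ B, blockWeight y N (bernoulliWeight (ρ b)) (s b) X) -
      a * ∏ b ∈ B, blockMass y N (s b)| ≤ ε * ∏ b ∈ B, blockMass y N (s b) := by
  rw [← expect_prod_blockWeight hs ρ]
  refine abs_expect_mul_sub_le (fun X => prod_nonneg fun b _ =>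
    blockWeight_nonneg (bernoulliWeight_nonneg ?_) _ _) fun X hX => hP X ?_
  · rcases hρ b with h | h <;> simp [h]
  · rw [card_fullRows_biUnion hs, Nat.cast_sum]
    exact sum_congr rfl fun b hb => card_fullRows_univ_of_blockWeight_ne_zero hN (hρ b)
      (prod_ne_zero_iff.1 hX b hb)

lemma le_blockCorrelation_singleton [DecidableEq β] (hs : (B : Set β).PairwiseDisjoint s)
    (hN : ∀ r, N r → ¬ AllOnesOn {y}ᶜ r)
    (h0 : ∀ X, #(fullRows univ (B.biUnion s) X) = 0 → |1 - P X| ≤ 1 / 4)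
    (h1 : ∀ X, #(fullRows univ (B.biUnion s) X) = 1 → |P X| ≤ 1 / 4) {b : β} (hb : b ∈ B) :
    1 / 2 * ∏ b ∈ B, blockMass y N (s b) ≤ blockCorrelation y N B s P {b} := by
  have hzero := abs_expect_mul_prod_blockWeight_sub_le (P := P) (a := 1) (ε := 1 / 4) hs hN
    (ρ := fun _ => 0) (fun _ => .inl rfl) fun X hX => by
      rw [abs_sub_comm]
      exact h0 X (by simpa using hX)
  have hone := abs_expect_mul_prod_blockWeight_sub_le (P := P) (a := 0) (ε := 1 / 4) hs hN
    (ρ := Pi.single b 1) (fun d => by by_cases hd : d = b <;> simp [hd])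
    fun X hX => by
      rw [sub_zero]
      exact h1 X (by simpa [sum_pi_single, hb] using hX)
  rw [blockCorrelation_singleton hb]
  linarith [(abs_le.1 hzero).1, (abs_le.1 hone).2]

end Weights

theorem card_blocks_lt [Finite T] [Nontrivial κ] {c r : ℕ} (hc : 0 < c) (hr : 0 < r)
    (hs : (B : Set β).PairwiseDisjoint s) (hcard : ∀ b ∈ B, #(s b) = r)
    (hB : 100 * (2 * smallSubsetCount κ c / √r * #B) ≤ c) {ι : Type*} {J : Finset ι}
    {a : ι → ℝ} {χ : ι → (T → κ → Bool) → ℝ}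
    (hχ : ∀ j ∈ J, ∃ S, #S ≤ c ∧ IsCylinderProduct S (χ j)) (ha : ∑ j ∈ J, |a j| ≤ 2 ^ c)
    (hP : ∀ X, |∑ j ∈ J, a j * χ j X| ≤ 1)
    (h0 : ∀ X, #(fullRows univ (B.biUnion s) X) = 0 → |1 - ∑ j ∈ J, a j * χ j X| ≤ 1 / 4)
    (h1 : ∀ X, #(fullRows univ (B.biUnion s) X) = 1 → |∑ j ∈ J, a j * χ j X| ≤ 1 / 4) :
    #B < 5 * c ^ 2 := by
  classical
  cases nonempty_fintype T
  obtain ⟨y⟩ : Nonempty κ := inferInstance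
  let N := NearlyFull c y
  let P (X : T → κ → Bool) : ℝ := ∑ j ∈ J, a j * χ j X
  have hs0 (b) (hb : b ∈ B) : (s b).Nonempty := card_pos.1 (hr.trans_eq (hcard b hb).symm)
  have hN (r) (h : N r) : ¬ AllOnesOn {y}ᶜ r := h.not_allOnesOn
  set W := ∏ b ∈ B, blockMass y N (s b)
  have hW : 0 < W := prod_pos fun b hb => blockMass_pos (rowDensity_nearlyFull_pos hc y) (hs0 b hb)
  refine card_lt_of_abs_sum_powerset_le_one (h := fun A => blockCorrelation y N B s P A / W)
    hc (by positivity) hB (fun ρ hρ => ?_) (fun A hA => ?_) fun b hb => ?_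
  · simp only [← mul_div_assoc, ← sum_div]
    rw [sum_powerset_blockCorrelation, abs_div, abs_of_pos hW, div_le_one hW]
    have h := abs_expect_mul_sub_le (P := P) (a := 0) (ε := 1)
      (w := fun X => ∏ b ∈ B, blockWeight y N (bernoulliWeight ρ) (s b) X)
      (fun X => prod_nonneg fun b _ => blockWeight_nonneg (bernoulliWeight_nonneg hρ) (s b) X)
      fun X _ => by simpa only [sub_zero] using hP X
    rwa [expect_prod_blockWeight hs fun _ => ρ, zero_mul, sub_zero, one_mul] at h
  · rw [abs_div, abs_of_pos hW, div_le_iff₀ hW, mul_assoc]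
    refine (abs_blockCorrelation_sum_le (ε := (2 * smallSubsetCount κ c / √r) ^ #A * W) a
      fun j hj => ?_).trans (mul_le_mul_of_nonneg_right ha (by positivity))
    obtain ⟨S, hSc, hχS⟩ := hχ j hj
    have hS : #(S.erase y) ≤ c := card_erase_le.trans hSc
    exact abs_blockCorrelation_le (notMem_erase y S) (nearlyFull_iff (notMem_erase y S) hS)
      (by exact_mod_cast two_pow_card_le_smallSubsetCount hS) (rowDensity_nearlyFull_le c y) hA hs
      hs0 (fun b hb => by rw [hcard b hb]) (hχS.mono (subset_insert_iff.2 le_rfl))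
  · rw [le_div_iff₀ hW]
    exact le_blockCorrelation_singleton hs hN h0 h1 hb

end Blocks

end Assembly

section FullMatrix

variable {T κ : Type*}

lemma IsCylinderProduct.eq_of_subsingleton [Subsingleton κ] {S : Finset κ}
    {χ : (T → κ → Bool) → ℝ} (hχ : IsCylinderProduct S χ) (X Y : T → κ → Bool) : χ X = χ Y := by
  obtain ⟨φ, -, hcol, hprod⟩ := hχ
  rw [hprod, hprod]
  exact prod_congr rfl fun j hj => hcol j hj X Y fun _ i hi => absurd (Subsingleton.elim i j) hi

variable [Fintype κ]

lemma fullRows_univ_piecewise_false [Fintype T] [DecidableEq T] [Nonempty κ] (D : Finset T)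
    (X : T → κ → Bool) :
    fullRows univ univ (D.piecewise X fun _ _ => false) = fullRows univ D X := by
  ext t
  by_cases ht : t ∈ D <;> simp [fullRows, AllOnesOn, ht]

variable [Fintype T] {ι : Type*} {J : Finset ι} {a : ι → ℝ} {χ : ι → (T → κ → Bool) → ℝ}

lemma isEmpty_of_approx_of_subsingleton [Nonempty κ] [Subsingleton κ]
    (hχ : ∀ j ∈ J, ∃ S, IsCylinderProduct S (χ j))
    (h0 : ∀ X, #(fullRows univ univ X) = 0 → |1 - ∑ j ∈ J, a j * χ j X| ≤ 1 / 4)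
    (h1 : ∀ X, #(fullRows univ univ X) = 1 → |∑ j ∈ J, a j * χ j X| ≤ 1 / 4) : IsEmpty T := by
  classical
  refine isEmpty_iff.2 fun t => ?_
  let X (D : Finset T) : T → κ → Bool := D.piecewise (fun _ _ => true) fun _ _ => false
  have hX (D : Finset T) : #(fullRows univ univ (X D)) = #D := by
    rw [fullRows_univ_piecewise_false]
    simp [fullRows, AllOnesOn]
  have hconst : ∑ j ∈ J, a j * χ j (X ∅) = ∑ j ∈ J, a j * χ j (X {t}) :=
    sum_congr rfl fun j hj => by
      obtain ⟨S, hS⟩ := hχ j hj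
      rw [hS.eq_of_subsingleton (X ∅)]
  have hnone := h0 (X ∅) (by rw [hX, card_empty])
  have hone := h1 (X {t}) (by rw [hX, card_singleton])
  rw [hconst] at hnone
  linarith [(abs_le.1 hnone).2, (abs_le.1 hone).2]

theorem card_rows_lt [DecidableEq κ] [Nonempty κ] {c : ℕ} (hc : 0 < c)
    (hχ : ∀ j ∈ J, ∃ S, #S ≤ c ∧ IsCylinderProduct S (χ j)) (ha : ∑ j ∈ J, |a j| ≤ 2 ^ c)
    (hP : ∀ X, |∑ j ∈ J, a j * χ j X| ≤ 1)
    (h0 : ∀ X, #(fullRows univ univ X) = 0 → |1 - ∑ j ∈ J, a j * χ j X| ≤ 1 / 4)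
    (h1 : ∀ X, #(fullRows univ univ X) = 1 → |∑ j ∈ J, a j * χ j X| ≤ 1 / 4) :
    Fintype.card T < 5000000 * (smallSubsetCount κ c ^ 2 * c ^ 4) := by
  classical
  have hK : 0 < smallSubsetCount κ c :=
    two_pow_card_le_smallSubsetCount (S := ∅) (by simp)
  rcases subsingleton_or_nontrivial κ with _ | _
  · have := isEmpty_of_approx_of_subsingleton (fun j hj => (hχ j hj).imp fun _ => And.right) h0 h1
    rw [Fintype.card_eq_zero]
    positivity
  by_contra! hcard
  set K := smallSubsetCount κ c
  obtain ⟨s, hs, hsr⟩ := exists_pairwiseDisjoint_card_eq (T := T) (M := 5 * c ^ 2)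
    (r := (1000 * c * K) ^ 2) (by linarith)
  let zeroOutside (X : T → κ → Bool) : T → κ → Bool :=
    (univ.biUnion s).piecewise X fun _ _ => false
  have hsqrt : √((1000 * c * K) ^ 2 : ℕ) = 1000 * c * K := by
    push_cast
    exact Real.sqrt_sq (by positivity)
  have hsmall : 100 * (2 * K / √((1000 * c * K) ^ 2 : ℕ) * #(univ : Finset (Fin (5 * c ^ 2)))) ≤
      (c : ℝ) := by
    rw [hsqrt, card_univ, Fintype.card_fin]
    push_cast
    refine le_of_eq ?_
    field_simp
    norm_num
  have hM := card_blocks_lt (a := a) (χ := fun j => χ j ∘ zeroOutside) hc (by positivity) hs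
    (fun b _ => hsr b) hsmall
    (fun j hj => (hχ j hj).imp fun S hS => hS.imp_right fun h =>
      h.comp (isColumnwise_piecewise _ _))
    ha (fun X => hP _) (fun X hX => h0 _ (by rwa [fullRows_univ_piecewise_false]))
    fun X hX => h1 _ (by rwa [fullRows_univ_piecewise_false])
  rw [card_univ, Fintype.card_fin] at hM
  exact hM.false

end FullMatrix

section Fin

variable {n k : ℕ}

lemma _root_.IsCylinderOn.isCylinderProduct {S : Finset (Fin k)}
    {χ : (Fin n → Fin k → Bool) → ℝ} (hχ : IsCylinderOn n k S χ) : IsCylinderProduct S χ := by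
  obtain ⟨φ, hφ, hcol, hprod⟩ := hχ
  refine ⟨φ, fun j hj X => ?_, hcol, hprod⟩
  rcases hφ j hj X with h | h <;> simp [h]

lemma atMostOneAllOnes_iff (X : Fin n → Fin k → Bool) :
    AtMostOneAllOnes n k X ↔ #(fullRows univ univ X) ≤ 1 := by
  simp [AtMostOneAllOnes, fullRows, AllOnesOn]

lemma disj_eq_true_iff (X : Fin n → Fin k → Bool) :
    DISJ n k X = true ↔ #(fullRows univ univ X) = 0 := by
  simp [DISJ, fullRows, AllOnesOn, filter_eq_empty_iff]

end Fin

end UniqueDisjointness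

open UniqueDisjointness

/-- There is a constant `C > 0` such that whenever a linear
combination `Π = Σ_j a_j χ_j` of `min{c,k}`-cylinder intersections with
`Σ_j |a_j| ≤ 2^c` satisfies `|Π| ≤ 1` everywhere and `|UDISJ_{n,k} − Π| ≤ 1/4` on
the set of matrices with at most one all-ones row, we have
`C(k,≤min{c,k})² · c⁴ ≥ C·n`. -/
theorem stmt_12 :
    ∃ C : ℝ, 0 < C ∧
      ∀ n k c : ℕ, 0 < n → 0 < k → 0 < c →
      ∀ (ι : Type) (J : Finset ι) (a : ι → ℝ)
        (χ : ι → ((Fin n → Fin k → Bool) → ℝ)),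
        (∀ j ∈ J, ∃ S : Finset (Fin k), S.card ≤ min c k ∧ IsCylinderOn n k S (χ j)) →
        (∑ j ∈ J, |a j| ≤ 2 ^ c) →
        (∀ X, |∑ j ∈ J, a j * χ j X| ≤ 1) →
        (∀ X, AtMostOneAllOnes n k X →
          |(if DISJ n k X then (1 : ℝ) else 0) - ∑ j ∈ J, a j * χ j X| ≤ 1 / 4) →
        C * n ≤ (∑ i ∈ Finset.range (min c k + 1), (k.choose i : ℝ)) ^ 2 * c ^ 4 := by
  refine ⟨1 / 5000000, by norm_num, fun n k c _ hk hc ι J a χ hχ ha hP happrox => ?_⟩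
  have : Nonempty (Fin k) := ⟨⟨0, hk⟩⟩
  have hrows := card_rows_lt hc
    (fun j hj => (hχ j hj).imp fun S hS => ⟨hS.1.trans (min_le_left c k), hS.2.isCylinderProduct⟩)
    ha hP
    (fun X hX => by
      simpa [(disj_eq_true_iff X).2 hX] using happrox X ((atMostOneAllOnes_iff X).2 (by omega)))
    fun X hX => by
      simpa [(disj_eq_true_iff X).not.2 (by omega)] using
        happrox X ((atMostOneAllOnes_iff X).2 hX.le)
  have hsum : (∑ i ∈ range (min c k + 1), (k.choose i : ℝ)) = smallSubsetCount (Fin k) c := by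
    rw [smallSubsetCount_eq_sum_choose, Fintype.card_fin, Nat.cast_sum]
  rw [Fintype.card_fin] at hrows
  rw [hsum]
  have : (n : ℝ) < 5000000 * (smallSubsetCount (Fin k) c ^ 2 * c ^ 4) := mod_cast hrows
  linarith
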